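/- For every real x with −1/4 < x < 1/4: (1/32)·∑_{n=0}^∞ 2^{−4(n+x)} · (1/2)_{n+x}³ (1/4)_{n+x} (3/4)_{n+x} / (1)_{n+x}⁵ · (120(n+x)² + 34(n+x) + 3) = (1/π²)·(8 cos⁴πx − 12 cos²πx + 5)/(2 cos⁴πx − cos²πx) − 16^{−x} · (1/2)_x³ (1/4)_x (3/4)_x / (1)_x⁵ · (256x⁵/(1−2x)⁴) · ∑_{n=0}^∞ (2n+1) · [ (1/2+x)_n / (3/2−x)_n ]⁴, where both series converge. -/

import Mathlib

/-
Write `w u = 1 / (Γ(1 - x - u) Γ(1 - x + u))` and let `-1/4 < x < 0`. A Wilf–Zeilberger pair makes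
the accelerated series, up to a factor, the value at `y = 0` of an even entire function `S`, for
which
  `P y = ∑_k 2 (y + 1/2 + k) w(y + 1/2 + k)⁴ - w(y + 1/2)⁴ (y + 1/2 - x)⁴ S y`
is entire and has period `1`; `P 0` combines the two series of the identity. For large `Re u`,
`π w u = sin(π(x + u)) Γ(x + u) / Γ(1 - x + u)` without poles, so `P` is divisible by
`cos⁴(π(x + y))`, and since `P y = o(exp(8π |Im y|))` the quotient is of the form
`a + b cos(2πy) + c sin(2πy)`. As `(y + 1/2 - x)⁴ w(y + 1/2)⁴ S y` is even, the odd part of `P`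
involves only the first sum; it is `o(exp(4π |Im y|))`, hence a multiple `A sin(2πy)`. At
`y = x - 1/2` one of the two sums vanishes and the other is a very-well-poised `₅F₄(1)`, which
gives `A`. Comparing the two descriptions of the odd part determines `a + b`, that is `P 0`.
Finally both sides of the identity are holomorphic for `|x| < 1/4`.
-/

/-- The Pochhammer symbol for real index: `(a)_t = Γ(a+t)/Γ(a)`. -/
noncomputable def pochG (a t : ℝ) : ℝ := Real.Gamma (a + t) / Real.Gamma a

/-- The Pochhammer symbol (rising factorial) `(a)_n = a (a+1) ⋯ (a+n-1)` for real `a`. -/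
def pochR (a : ℝ) (n : ℕ) : ℝ := ∏ j ∈ Finset.range n, (a + j)

section

open Complex Filter Topology Asymptotics

section Growth

/-- The filter `|Im z| → ∞` on `ℂ`, with no condition on the real part. -/
def imInfty : Filter ℂ := comap (fun z => |z.im|) atTop

/-- `g z = o(exp (c |Im z|))` as `|Im z| → ∞`, uniformly in `Re z`. -/
def SmallGrowth (c : ℝ) (g : ℂ → ℂ) : Prop :=
  g =o[imInfty] fun z => Real.exp (c * |z.im|)

instance imInfty_neBot : imInfty.NeBot :=
  comap_neBot fun _ ht => by
    obtain ⟨a, ha⟩ := mem_atTop_sets.1 ht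
    exact ⟨|a| * I, ha _ (by simp [le_abs_self])⟩

lemma tendsto_abs_im_imInfty : Tendsto (fun z : ℂ => |z.im|) imInfty atTop := tendsto_comap

lemma eventually_le_abs_im (T : ℝ) : ∀ᶠ z in imInfty, T ≤ |z.im| :=
  tendsto_abs_im_imInfty.eventually_ge_atTop T

lemma SmallGrowth.add {c : ℝ} {f g : ℂ → ℂ} (hf : SmallGrowth c f) (hg : SmallGrowth c g) :
    SmallGrowth c fun z => f z + g z :=
  IsLittleO.add hf hg

lemma SmallGrowth.sub {c : ℝ} {f g : ℂ → ℂ} (hf : SmallGrowth c f) (hg : SmallGrowth c g) :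
    SmallGrowth c fun z => f z - g z :=
  IsLittleO.sub hf hg

lemma SmallGrowth.const_mul {c : ℝ} {f : ℂ → ℂ} (hf : SmallGrowth c f) (a : ℂ) :
    SmallGrowth c fun z => a * f z :=
  IsLittleO.const_mul_left hf a

lemma SmallGrowth.comp_neg {c : ℝ} {f : ℂ → ℂ} (hf : SmallGrowth c f) :
    SmallGrowth c fun z => f (-z) := by
  have hneg : Tendsto (fun z : ℂ => -z) imInfty imInfty :=
    tendsto_comap_iff.2 (by simpa [Function.comp_def] using tendsto_abs_im_imInfty)
  simpa [SmallGrowth, Function.comp_def] using IsLittleO.comp_tendsto hf hneg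

lemma smallGrowth_const {c : ℝ} (hc : 0 < c) (a : ℂ) : SmallGrowth c fun _ => a :=
  isLittleO_const_left.2 <| .inr <| tendsto_norm_atTop_atTop.comp <|
    Real.tendsto_exp_atTop.comp <| tendsto_abs_im_imInfty.const_mul_atTop hc

lemma norm_add_intCast {g : ℂ → ℂ} (hp : ∀ z, ‖g (z + 1)‖ = ‖g z‖) (z : ℂ) (m : ℤ) :
    ‖g (z + m)‖ = ‖g z‖ := by
  have h : Function.Periodic (fun z => ‖g z‖) (1 : ℂ) := hp
  simpa using h.int_mul m z

lemma SmallGrowth.of_strip {c : ℝ} {g : ℂ → ℂ} (σ : ℝ) (hp : ∀ z, ‖g (z + 1)‖ = ‖g z‖)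
    (hg : g =o[imInfty ⊓ 𝓟 {z | z.re ∈ Set.Ico σ (σ + 1)}] fun z => Real.exp (c * |z.im|)) :
    SmallGrowth c g := by
  have hshift : Tendsto (fun z : ℂ => z + (-⌊z.re - σ⌋ : ℤ)) imInfty
      (imInfty ⊓ 𝓟 {z | z.re ∈ Set.Ico σ (σ + 1)}) := by
    refine tendsto_inf.2 ⟨tendsto_comap_iff.2 ?_, tendsto_principal.2 (.of_forall fun z => ?_)⟩
    · simpa [Function.comp_def] using tendsto_abs_im_imInfty
    · simp only [Set.mem_ofPred_eq, add_re, Int.cast_neg, neg_re, intCast_re]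
      constructor <;> linarith [Int.floor_le (z.re - σ), Int.lt_floor_add_one (z.re - σ)]
  have hcomp := (hg.comp_tendsto hshift).norm_left
  refine (hcomp.congr (fun z => norm_add_intCast hp z _) fun z => ?_).of_norm_left
  simp

lemma eq_zero_of_smallGrowth_zero {g : ℂ → ℂ} (hd : Differentiable ℂ g)
    (hp : ∀ z, ‖g (z + 1)‖ = ‖g z‖) (hs : SmallGrowth 0 g) (z : ℂ) : g z = 0 := by
  have hlim : Tendsto g imInfty (𝓝 0) := by
    simpa [SmallGrowth, isLittleO_one_iff] using hs
  obtain ⟨T, hT⟩ : ∃ T : ℝ, ∀ z : ℂ, T ≤ |z.im| → ‖g z‖ ≤ 1 := by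
    have h := hlim.norm.eventually_le_const (by simp : ‖(0 : ℂ)‖ < 1)
    simpa using (atTop_basis.comap _).eventually_iff.1 h
  obtain ⟨C, hC⟩ := (isCompact_Icc.reProdIm isCompact_Icc :
    IsCompact (Set.Icc (0 : ℝ) 1 ×ℂ Set.Icc (-T) T)).exists_bound_of_continuousOn
      hd.continuous.continuousOn
  have hbounded : Bornology.IsBounded (Set.range g) := by
    refine isBounded_iff_forall_norm_le.2 ⟨max C 1, ?_⟩
    rintro _ ⟨z, rfl⟩
    rcases le_or_gt T |z.im| with hz | hz
    · exact le_max_of_le_right (hT z hz)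
    · refine le_max_of_le_left ?_
      rw [← norm_add_intCast hp z (-⌊z.re⌋)]
      refine hC _ (mem_reProdIm.2 ⟨?_, ?_⟩)
      · simp only [add_re, Int.cast_neg, neg_re, intCast_re]
        constructor <;> linarith [Int.floor_le z.re, Int.lt_floor_add_one z.re]
      · simpa using abs_le.1 hz.le
  refine tendsto_nhds_unique (tendsto_const_nhds.congr fun w => ?_) hlim
  exact hd.apply_eq_apply_of_bounded hbounded z w

end Growth

section SinDiv

/-- The quotient of `g` by `z ↦ sin (π (z + a))`. The value at a zero of the sine is the one given
by l'Hôpital's rule, so that the quotient is entire when `g` vanishes at all those zeros. -/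
noncomputable def sinDiv (a : ℝ) (g : ℂ → ℂ) (z : ℂ) : ℂ :=
  if sin (Real.pi * (z + a)) = 0 then deriv g z / (Real.pi * cos (Real.pi * (z + a)))
  else g z / sin (Real.pi * (z + a))

variable {a : ℝ} {g : ℂ → ℂ}

lemma sin_pi_mul_add_eq_zero_iff {z : ℂ} :
    sin (Real.pi * (z + a)) = 0 ↔ ∃ m : ℤ, z = -a + m := by
  rw [Complex.sin_eq_zero_iff]
  refine exists_congr fun m => ?_
  rw [mul_comm (m : ℂ), mul_right_inj' (ofReal_ne_zero.2 Real.pi_ne_zero), ← eq_sub_iff_add_eq,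
    sub_eq_neg_add]

lemma hasDerivAt_sin_pi_mul_add (a : ℝ) (z : ℂ) :
    HasDerivAt (fun z : ℂ => sin (Real.pi * (z + a))) (Real.pi * cos (Real.pi * (z + a))) z := by
  simpa [mul_comm] using (((hasDerivAt_id z).add_const (a : ℂ)).const_mul (Real.pi : ℂ)).csin

lemma pi_mul_cos_ne_zero {w : ℂ} (h : sin w = 0) : (Real.pi : ℂ) * cos w ≠ 0 := by
  refine mul_ne_zero (ofReal_ne_zero.2 Real.pi_ne_zero) fun h' => ?_
  simpa [h, h'] using sin_sq_add_cos_sq w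

lemma sin_mul_sinDiv (hz : ∀ m : ℤ, g (-a + m) = 0) (z : ℂ) :
    sin (Real.pi * (z + a)) * sinDiv a g z = g z := by
  unfold sinDiv
  split_ifs with h
  · obtain ⟨m, rfl⟩ := sin_pi_mul_add_eq_zero_iff.1 h
    rw [h, zero_mul, hz]
  · field_simp

lemma differentiable_sinDiv (hd : Differentiable ℂ g) (hz : ∀ m : ℤ, g (-a + m) = 0) :
    Differentiable ℂ (sinDiv a g) := by
  have hsd : Differentiable ℂ fun z : ℂ => sin (Real.pi * (z + a)) := fun z =>
    (hasDerivAt_sin_pi_mul_add a z).differentiableAt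
  set s : ℂ → ℂ := fun z => sin (Real.pi * (z + a)) with hs
  have dslope_diff : ∀ {f : ℂ → ℂ} (c), Differentiable ℂ f → DifferentiableAt ℂ (dslope f c) c :=
    fun c hf => ((differentiableOn_dslope univ_mem).2 hf.differentiableOn).differentiableAt univ_mem
  intro c
  rcases eq_or_ne (s c) 0 with hc | hc
  · have hgc : g c = 0 := by rw [← sin_mul_sinDiv hz c]; simp only [hs] at hc; rw [hc, zero_mul]
    have hderiv : deriv s c = Real.pi * cos (Real.pi * (c + a)) :=
      (hasDerivAt_sin_pi_mul_add a c).deriv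
    have hne : dslope s c c ≠ 0 := by rw [dslope_same, hderiv]; exact pi_mul_cos_ne_zero hc
    refine ((dslope_diff c hd).div (dslope_diff c hsd) hne).congr_of_eventuallyEq ?_
    filter_upwards [(dslope_diff c hsd).continuousAt.eventually_ne hne] with z hsz
    rcases eq_or_ne z c with rfl | hzc
    · simp only [Pi.div_apply, dslope_same, hderiv]
      exact if_pos hc
    · have hsub : z - c ≠ 0 := sub_ne_zero.2 hzc
      rw [Pi.div_apply, dslope_of_ne _ hzc, dslope_of_ne _ hzc, slope_def_field, slope_def_field,
        hgc, hc, sub_zero, sub_zero, div_div_div_cancel_right₀ hsub]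
      rw [dslope_of_ne _ hzc, slope_def_field, hc, sub_zero] at hsz
      exact if_neg (div_ne_zero_iff.1 hsz).1
  · refine ((hd c).div (hsd c) hc).congr_of_eventuallyEq ?_
    filter_upwards [(hsd c).continuousAt.eventually_ne hc] with z hz'
    exact if_neg hz'

lemma sinDiv_add_one {ε : ℂ} (hp : ∀ z, g (z + 1) = ε * g z) (z : ℂ) :
    sinDiv a g (z + 1) = -ε * sinDiv a g z := by
  have hderiv : deriv g (z + 1) = ε * deriv g z := by
    rw [← deriv_comp_add_const, funext hp, deriv_const_mul_field]
  have hpi : (Real.pi : ℂ) * (z + 1 + a) = Real.pi * (z + a) + Real.pi := by ring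
  unfold sinDiv
  rw [hpi, sin_add_pi, cos_add_pi, hderiv, hp]
  simp only [neg_eq_zero]
  split_ifs <;> simp [div_neg, neg_mul, mul_neg, mul_div_assoc]

lemma sinDiv_eq_of_eventuallyEq {f : ℂ → ℂ} {z : ℂ} (hf : DifferentiableAt ℂ f z)
    (h : g =ᶠ[𝓝 z] fun w => sin (Real.pi * (w + a)) * f w) : sinDiv a g z = f z := by
  unfold sinDiv
  split_ifs with hz
  · rw [h.deriv_eq, ((hasDerivAt_sin_pi_mul_add a z).fun_mul hf.hasDerivAt).deriv, hz, zero_mul,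
      add_zero, mul_div_cancel_left₀ _ (pi_mul_cos_ne_zero hz)]
  · rw [h.eq_of_nhds, mul_div_cancel_left₀ _ hz]

lemma sinh_abs_im_le_norm_sin (z : ℂ) : Real.sinh |z.im| ≤ ‖sin z‖ := by
  have hnorm : ‖sin z‖ ^ 2 = Real.sin z.re ^ 2 + Real.sinh z.im ^ 2 := by
    have hsin : sin z = (Real.sin z.re * Real.cosh z.im : ℝ) +
        (Real.cos z.re * Real.sinh z.im : ℝ) * I := by
      push_cast; exact Complex.sin_eq z
    rw [← normSq_eq_norm_sq, hsin, normSq_add_mul_I]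
    linear_combination Real.sin z.re ^ 2 * Real.cosh_sq z.im +
      Real.sinh z.im ^ 2 * Real.sin_sq_add_cos_sq z.re
  refine abs_le_of_sq_le_sq' ?_ (norm_nonneg _) |>.2
  rw [hnorm, ← Real.abs_sinh, sq_abs]
  linarith [sq_nonneg (Real.sin z.re)]

lemma exp_le_four_mul_sinh {t : ℝ} (ht : 1 ≤ t) : Real.exp t ≤ 4 * Real.sinh t := by
  rw [Real.sinh_eq]
  have hneg : Real.exp (-t) ≤ 1 := Real.exp_le_one_iff.2 (by linarith)
  linarith [Real.add_one_le_exp t]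

lemma exp_le_four_mul_norm_sin_pi_mul_add (a : ℝ) {z : ℂ} (hz : 1 ≤ |z.im|) :
    Real.exp (Real.pi * |z.im|) ≤ 4 * ‖sin (Real.pi * (z + a))‖ := by
  have hle := sinh_abs_im_le_norm_sin (Real.pi * (z + a))
  rw [im_ofReal_mul, abs_mul, abs_of_pos Real.pi_pos, add_im, ofReal_im, add_zero] at hle
  have hone : 1 ≤ Real.pi * |z.im| := by nlinarith [Real.pi_gt_three]
  linarith [exp_le_four_mul_sinh hone]

lemma SmallGrowth.sinDiv {c : ℝ} (hs : SmallGrowth c g) :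
    SmallGrowth (c - Real.pi) (sinDiv a g) := by
  refine isLittleO_iff.2 fun ε hε => ?_
  filter_upwards [isLittleO_iff.1 hs (show 0 < ε / 4 by positivity), eventually_le_abs_im 1]
    with z hgz hz
  have hsin := exp_le_four_mul_norm_sin_pi_mul_add a hz
  have hpos : 0 < ‖sin (Real.pi * (z + a))‖ := by
    linarith [Real.exp_pos (Real.pi * |z.im|)]
  rw [_root_.sinDiv, if_neg (norm_pos_iff.1 hpos), norm_div, div_le_iff₀ hpos]
  rw [Real.norm_of_nonneg (Real.exp_pos _).le] at hgz ⊢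
  calc ‖g z‖ ≤ ε / 4 * Real.exp (c * |z.im|) := hgz
    _ = ε * Real.exp ((c - Real.pi) * |z.im|) * (Real.exp (Real.pi * |z.im|) / 4) := by
        rw [sub_mul, Real.exp_sub]; field_simp
    _ ≤ _ := by gcongr; linarith

lemma sinDiv_zero_neg {ε : ℂ} (hp : ∀ z, g (-z) = ε * g z) (z : ℂ) :
    sinDiv 0 g (-z) = -ε * sinDiv 0 g z := by
  have hderiv : deriv g (-z) = -ε * deriv g z := by
    rw [neg_mul, ← deriv_const_mul_field, ← funext hp, deriv_comp_neg, neg_neg]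
  unfold sinDiv
  simp only [ofReal_zero, add_zero, mul_neg, sin_neg, cos_neg, neg_eq_zero, hderiv, hp]
  split_ifs <;> simp [div_neg, neg_div, mul_div_assoc]

lemma apply_add_intCast_eq_zero (hp : ∀ z, ‖g (z + 1)‖ = ‖g z‖) {z : ℂ} (hz : g z = 0) (m : ℤ) :
    g (z + m) = 0 := by
  rw [← norm_eq_zero, norm_add_intCast hp, hz, norm_zero]

lemma apply_neg_add_intCast_eq_zero {R : ℝ} {f : ℂ → ℂ} (hp : ∀ z, ‖g (z + 1)‖ = ‖g z‖)
    (hgf : ∀ z : ℂ, R < z.re → g z = sin (Real.pi * (z + a)) * f z) (m : ℤ) :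
    g (-a + m) = 0 := by
  obtain ⟨n, hn⟩ := exists_int_gt (R + a)
  have hsin : sin (Real.pi * (-a + (n : ℂ) + a)) = 0 := sin_pi_mul_add_eq_zero_iff.2 ⟨n, rfl⟩
  have hgn : g (-a + n) = 0 := by
    rw [hgf _ (by simpa using by linarith), hsin, zero_mul]
  simpa using apply_add_intCast_eq_zero hp hgn (m - n)

/-- The zeros on a right half-plane propagate to the whole plane by periodicity. -/
lemma exists_eq_sin_pow_mul {R : ℝ} {f : ℂ → ℂ}
    (hf : ∀ z : ℂ, R < z.re → DifferentiableAt ℂ f z) (k : ℕ) :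
    ∀ {c : ℝ} {g : ℂ → ℂ} {ε : ℂ}, ‖ε‖ = 1 → Differentiable ℂ g → (∀ z, g (z + 1) = ε * g z) →
      SmallGrowth c g → (∀ z : ℂ, R < z.re → g z = sin (Real.pi * (z + a)) ^ k * f z) →
      ∃ q : ℂ → ℂ, Differentiable ℂ q ∧ (∀ z, q (z + 1) = (-1) ^ k * ε * q z) ∧
        SmallGrowth (c - k * Real.pi) q ∧ ∀ z, g z = sin (Real.pi * (z + a)) ^ k * q z := by
  induction k with
  | zero => exact fun _ hd hp hs _ => ⟨_, hd, by simpa using hp, by simpa using hs, by simp⟩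
  | succ k ih =>
    intro c g ε hε hd hp hs hgf
    have hgf' : ∀ z : ℂ, R < z.re →
        g z = sin (Real.pi * (z + a)) * (sin (Real.pi * (z + a)) ^ k * f z) := fun z hR => by
      rw [hgf z hR, pow_succ', mul_assoc]
    have hz := apply_neg_add_intCast_eq_zero (fun z => by rw [hp, norm_mul, hε, one_mul]) hgf'
    have hdiv : ∀ z : ℂ, R < z.re → sinDiv a g z = sin (Real.pi * (z + a)) ^ k * f z :=
      fun z hR => sinDiv_eq_of_eventuallyEq
        (((hasDerivAt_sin_pi_mul_add a z).differentiableAt.pow k).mul (hf z hR))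
        ((continuous_re.continuousAt.eventually_const_lt hR).mono hgf')
    obtain ⟨q, hqd, hqp, hqs, hq⟩ := ih (by rwa [norm_neg]) (differentiable_sinDiv hd hz)
      (sinDiv_add_one hp) hs.sinDiv hdiv
    refine ⟨q, hqd, fun z => by rw [hqp]; ring, ?_, fun z => ?_⟩
    · rwa [Nat.cast_succ, add_mul, one_mul, add_comm, ← sub_sub]
    · rw [← sin_mul_sinDiv hz, hq, pow_succ', mul_assoc]

end SinDiv

section Decomposition

variable {c : ℝ} {g : ℂ → ℂ}

lemma exists_eq_sin_mul_cos_mul_of_odd (hd : Differentiable ℂ g) (hp : ∀ z, g (z + 1) = g z)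
    (ho : ∀ z, g (-z) = -g z) (hs : SmallGrowth c g) :
    ∃ q : ℂ → ℂ, Differentiable ℂ q ∧ (∀ z, q (z + 1) = q z) ∧ SmallGrowth (c - 2 * Real.pi) q ∧
      ∀ z, g z = sin (Real.pi * z) * cos (Real.pi * z) * q z := by
  have hg0 : g (-(0 : ℝ)) = 0 := by
    simpa using self_eq_neg.1 ((congrArg g neg_zero).symm.trans (ho 0))
  have hz : ∀ m : ℤ, g (-(0 : ℝ) + m) = 0 :=
    apply_add_intCast_eq_zero (fun z => by rw [hp]) hg0
  set h := sinDiv 0 g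
  have hanti : ∀ z, h (z + 1) = -1 * h z := sinDiv_add_one (by simpa using hp)
  have heven : ∀ z, h (-z) = h z := fun z => by
    simpa using sinDiv_zero_neg (ε := -1) (by simpa using ho) z
  have hhalf : h (-(1 / 2 : ℝ)) = 0 := by
    have hneg : h (1 / 2) = -h (1 / 2) := calc
      h (1 / 2) = h (-(1 / 2) + 1) := by norm_num
      _ = -h (1 / 2) := by rw [hanti, heven, neg_one_mul]
    rw [heven]; push_cast; exact self_eq_neg.1 hneg
  have hz' : ∀ m : ℤ, h (-(1 / 2 : ℝ) + m) = 0 :=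
    apply_add_intCast_eq_zero (fun z => by rw [hanti, neg_one_mul, norm_neg]) hhalf
  refine ⟨sinDiv (1 / 2) h, differentiable_sinDiv (differentiable_sinDiv hd hz) hz', fun z => ?_,
    ?_, fun z => ?_⟩
  · simpa using sinDiv_add_one (a := 1 / 2) hanti z
  · rw [two_mul, ← sub_sub]
    exact hs.sinDiv.sinDiv
  · have hcos : cos (Real.pi * z) = sin (Real.pi * (z + (1 / 2 : ℝ))) := by
      rw [← sin_add_pi_div_two]; push_cast; ring_nf
    rw [hcos, mul_assoc, sin_mul_sinDiv hz', ← sin_mul_sinDiv hz z, ofReal_zero, add_zero]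

lemma exists_eq_sin_sq_mul_of_even (hd : Differentiable ℂ g) (hp : ∀ z, g (z + 1) = g z)
    (he : ∀ z, g (-z) = g z) (h0 : g 0 = 0) (hs : SmallGrowth c g) :
    ∃ q : ℂ → ℂ, Differentiable ℂ q ∧ (∀ z, q (z + 1) = q z) ∧ SmallGrowth (c - 2 * Real.pi) q ∧
      ∀ z, g z = sin (Real.pi * z) ^ 2 * q z := by
  have hz : ∀ m : ℤ, g (-(0 : ℝ) + m) = 0 :=
    apply_add_intCast_eq_zero (fun z => by rw [hp]) (by simpa using h0)
  set h := sinDiv 0 g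
  have hanti : ∀ z, h (z + 1) = -1 * h z := sinDiv_add_one (by simpa using hp)
  have hodd : h 0 = -h 0 := by
    simpa using sinDiv_zero_neg (ε := 1) (by simpa using he) 0
  have hz' : ∀ m : ℤ, h (-(0 : ℝ) + m) = 0 :=
    apply_add_intCast_eq_zero (fun z => by rw [hanti, neg_one_mul, norm_neg])
      (by simpa using self_eq_neg.1 hodd)
  refine ⟨sinDiv 0 h, differentiable_sinDiv (differentiable_sinDiv hd hz) hz', fun z => ?_,
    ?_, fun z => ?_⟩
  · simpa using sinDiv_add_one (a := 0) hanti z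
  · rw [two_mul, ← sub_sub]
    exact hs.sinDiv.sinDiv
  · have hsin : sin (Real.pi * z) = sin (Real.pi * (z + (0 : ℝ))) := by simp
    rw [hsin, sq, mul_assoc, sin_mul_sinDiv hz', sin_mul_sinDiv hz]

lemma exists_eq_add_sin_sq_mul_add (hd : Differentiable ℂ g) (hp : ∀ z, g (z + 1) = g z)
    (hc : 0 < c) (hs : SmallGrowth c g) :
    ∃ p q : ℂ → ℂ, (Differentiable ℂ p ∧ (∀ z, p (z + 1) = p z) ∧
        SmallGrowth (c - 2 * Real.pi) p) ∧
      (Differentiable ℂ q ∧ (∀ z, q (z + 1) = q z) ∧ SmallGrowth (c - 2 * Real.pi) q) ∧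
      ∀ z, g z = g 0 + sin (Real.pi * z) ^ 2 * p z +
        sin (Real.pi * z) * cos (Real.pi * z) * q z := by
  have hpn : ∀ z, g (-(z + 1)) = g (-z) := fun z => by rw [← hp (-(z + 1))]; ring_nf
  have hdn : Differentiable ℂ fun z => g (-z) := hd.comp differentiable_neg
  obtain ⟨p, hpd, hpp, hps, hpe⟩ := exists_eq_sin_sq_mul_of_even (c := c)
    (g := fun z => g z + g (-z) - 2 * g 0) ((hd.add hdn).sub_const _)
    (fun z => by rw [hp, hpn]) (fun z => by rw [neg_neg, add_comm (g z)])
    (by rw [neg_zero]; ring) ((hs.add hs.comp_neg).sub (smallGrowth_const hc _))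
  obtain ⟨q, hqd, hqp, hqs, hqo⟩ := exists_eq_sin_mul_cos_mul_of_odd (c := c)
    (g := fun z => g z - g (-z)) (hd.sub hdn) (fun z => by rw [hp, hpn])
    (fun z => by rw [neg_neg, neg_sub]) (hs.sub hs.comp_neg)
  refine ⟨fun z => 1 / 2 * p z, fun z => 1 / 2 * q z,
    ⟨hpd.const_mul _, fun z => by simp only [hpp], hps.const_mul _⟩,
    ⟨hqd.const_mul _, fun z => by simp only [hqp], hqs.const_mul _⟩, fun z => ?_⟩
  linear_combination 1 / 2 * hpe z + 1 / 2 * hqo z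

lemma eq_apply_zero_of_periodic (hd : Differentiable ℂ g) (hp : ∀ z, g (z + 1) = g z)
    (hs : SmallGrowth (2 * Real.pi) g) (z : ℂ) : g z = g 0 := by
  obtain ⟨p, q, ⟨hpd, hpp, hps⟩, ⟨hqd, hqp, hqs⟩, h⟩ :=
    exists_eq_add_sin_sq_mul_add hd hp (by positivity) hs
  rw [sub_self] at hps hqs
  rw [h, eq_zero_of_smallGrowth_zero hpd (fun z => by rw [hpp]) hps,
    eq_zero_of_smallGrowth_zero hqd (fun z => by rw [hqp]) hqs]
  ring

lemma exists_eq_add_cos_add_sin (hd : Differentiable ℂ g) (hp : ∀ z, g (z + 1) = g z)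
    (hs : SmallGrowth (4 * Real.pi) g) :
    ∃ a b c : ℂ, ∀ z, g z = a + b * cos (2 * Real.pi * z) + c * sin (2 * Real.pi * z) := by
  obtain ⟨p, q, ⟨hpd, hpp, hps⟩, ⟨hqd, hqp, hqs⟩, h⟩ :=
    exists_eq_add_sin_sq_mul_add hd hp (by positivity) hs
  rw [show 4 * Real.pi - 2 * Real.pi = 2 * Real.pi by ring] at hps hqs
  refine ⟨g 0 + p 0 / 2, -p 0 / 2, q 0 / 2, fun z => ?_⟩
  rw [h, eq_apply_zero_of_periodic hpd hpp hps z, eq_apply_zero_of_periodic hqd hqp hqs z,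
    mul_assoc 2, Complex.cos_two_mul, Complex.sin_two_mul, Complex.cos_sq']
  ring

end Decomposition

section Gamma

lemma norm_betaIntegral_le {u v : ℂ} (hu : 0 < u.re) (hv : 0 < v.re) :
    ‖betaIntegral u v‖ ≤ ProbabilityTheory.beta u.re v.re := by
  have hu' : 0 < (u.re : ℂ).re := hu
  have hv' : 0 < (v.re : ℂ).re := hv
  have hnorm : ∀ t ∈ Set.Ioo (0 : ℝ) 1, ‖(t : ℂ) ^ (u - 1) * (1 - (t : ℂ)) ^ (v - 1)‖ =
      ((t : ℂ) ^ ((u.re : ℂ) - 1) * (1 - (t : ℂ)) ^ ((v.re : ℂ) - 1)).re := fun t ht => by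
    have hre : ∀ {s : ℝ} (p : ℂ), 0 < s → ‖(s : ℂ) ^ (p - 1)‖ = s ^ (p.re - 1) := fun p hs => by
      rw [norm_cpow_eq_rpow_re_of_pos hs, sub_re, one_re]
    have h1t : 0 < 1 - t := by linarith [ht.2]
    simp only [← ofReal_one, ← ofReal_sub]
    rw [ofReal_one, norm_mul, hre u ht.1, hre v h1t, ← ofReal_cpow ht.1.le, ← ofReal_cpow h1t.le,
      ← ofReal_mul, ofReal_re]
  calc ‖betaIntegral u v‖
      ≤ ∫ t in (0 : ℝ)..1, ‖(t : ℂ) ^ (u - 1) * (1 - (t : ℂ)) ^ (v - 1)‖ :=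
        intervalIntegral.norm_integral_le_integral_norm zero_le_one
    _ = ∫ t in (0 : ℝ)..1, ((t : ℂ) ^ ((u.re : ℂ) - 1) * (1 - (t : ℂ)) ^ ((v.re : ℂ) - 1)).re := by
        simp only [intervalIntegral.integral_of_le zero_le_one,
          MeasureTheory.integral_Ioc_eq_integral_Ioo]
        exact MeasureTheory.setIntegral_congr_fun measurableSet_Ioo hnorm
    _ = (betaIntegral u.re v.re).re :=
        reCLM.intervalIntegral_comp_comm (betaIntegral_convergent hu' hv')
    _ = ProbabilityTheory.beta u.re v.re :=
        (ProbabilityTheory.beta_eq_betaIntegralReal _ _ hu hv).symm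

lemma norm_Gamma_div_Gamma_add_le {w : ℂ} {s : ℝ} (hw : 0 < w.re) (hs : 0 < s) :
    ‖Complex.Gamma w / Complex.Gamma (w + s)‖ ≤ Real.Gamma w.re / Real.Gamma (w.re + s) := by
  have hs' : 0 < (s : ℂ).re := hs
  have hΓs : 0 < Real.Gamma s := Real.Gamma_pos_of_pos hs
  have h := norm_betaIntegral_le hw hs'
  rw [betaIntegral_eq_Gamma_mul_div w s hw hs', ProbabilityTheory.beta, ofReal_re,
    mul_div_right_comm, mul_div_right_comm, norm_mul, Complex.Gamma_ofReal, norm_real,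
    Real.norm_of_nonneg hΓs.le] at h
  exact le_of_mul_le_mul_right h hΓs

lemma norm_Gamma_div_Gamma_add_le_inv {w : ℂ} {s : ℝ} (hw : 1 ≤ w.re) (hs : 1 < s) :
    ‖Complex.Gamma w / Complex.Gamma (w + s)‖ ≤ ‖w‖⁻¹ := by
  have hw0 : w ≠ 0 := by rintro rfl; norm_num at hw
  have hshift : Complex.Gamma w / Complex.Gamma (w + s) =
      w⁻¹ * (Complex.Gamma (w + 1) / Complex.Gamma (w + 1 + (s - 1 : ℝ))) := by
    rw [Complex.Gamma_add_one w hw0, ofReal_sub, ofReal_one, add_add_sub_cancel]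
    field_simp
  have hmono : Real.Gamma (w.re + 1) ≤ Real.Gamma (w.re + 1 + (s - 1)) :=
    Real.Gamma_strictMonoOn_Ici.monotoneOn (by simp; linarith) (by simp; linarith) (by linarith)
  have hle := norm_Gamma_div_Gamma_add_le (w := w + 1) (s := s - 1) (by simp; linarith)
    (by linarith)
  rw [hshift, norm_mul, norm_inv]
  refine mul_le_of_le_one_right (by positivity) (hle.trans ?_)
  rw [add_re, one_re]
  exact div_le_one_of_le₀ hmono (Real.Gamma_pos_of_pos (by linarith)).le

lemma norm_sin_le_exp (z : ℂ) : ‖sin z‖ ≤ Real.exp |z.im| := by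
  rw [Complex.sin, norm_div, norm_mul, norm_I, mul_one, Complex.norm_two, div_le_iff₀ two_pos]
  refine (norm_sub_le _ _).trans ?_
  rw [Complex.norm_exp, Complex.norm_exp, mul_two]
  gcongr <;> simp [le_abs_self, neg_le_abs]

end Gamma

section GammaPair

/-- The quotient `Γ(x + u) / Γ(1 - x + u)`. -/
noncomputable def gammaQuot (x : ℝ) (u : ℂ) : ℂ :=
  Complex.Gamma (x + u) / Complex.Gamma (1 - x + u)

/-- The entire function `1 / (Γ(1 - x - u) Γ(1 - x + u))` of `u`. -/
noncomputable def recipGammaPair (x : ℝ) (u : ℂ) : ℂ :=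
  (Complex.Gamma (1 - x - u))⁻¹ * (Complex.Gamma (1 - x + u))⁻¹

variable {x : ℝ} {u : ℂ}

lemma recipGammaPair_neg (x : ℝ) (u : ℂ) : recipGammaPair x (-u) = recipGammaPair x u := by
  unfold recipGammaPair
  rw [sub_neg_eq_add, ← sub_eq_add_neg, mul_comm]

lemma differentiable_recipGammaPair (x : ℝ) : Differentiable ℂ (recipGammaPair x) :=
  (Complex.differentiable_one_div_Gamma.comp (differentiable_id.const_sub _)).mul
    (Complex.differentiable_one_div_Gamma.comp (differentiable_id.const_add _))

lemma recipGammaPair_add_one (x : ℝ) (u : ℂ) :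
    recipGammaPair x (u + 1) * (1 - x + u) = -(recipGammaPair x u * (x + u)) := by
  have h₁ := Complex.one_div_Gamma_eq_self_mul_one_div_Gamma_add_one (-x - u)
  have h₂ := Complex.one_div_Gamma_eq_self_mul_one_div_Gamma_add_one (1 - x + u)
  rw [show -(x : ℂ) - u + 1 = 1 - x - u by ring] at h₁
  unfold recipGammaPair
  rw [show (1 : ℂ) - x - (u + 1) = -x - u by ring,
    show (1 : ℂ) - x + (u + 1) = 1 - x + u + 1 by ring, h₁, h₂]
  ring

lemma recipGammaPair_eq_sin_mul (h : Complex.Gamma (x + u) ≠ 0) :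
    recipGammaPair x u = sin (Real.pi * (x + u)) / Real.pi * gammaQuot x u := by
  have : (Real.pi : ℂ) ≠ 0 := ofReal_ne_zero.2 Real.pi_ne_zero
  have hrefl := Complex.Gamma_mul_Gamma_one_sub (x + u)
  have hinv : (Complex.Gamma (1 - x - u))⁻¹ =
      sin (Real.pi * (x + u)) / Real.pi * Complex.Gamma (x + u) := by
    rw [sub_sub, ← inv_div, ← hrefl]
    field_simp
  rw [recipGammaPair, gammaQuot, hinv]
  ring

lemma gammaQuot_add_one (h₁ : (x : ℂ) + u ≠ 0) (h₂ : 1 - (x : ℂ) + u ≠ 0) :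
    gammaQuot x (u + 1) = gammaQuot x u * ((x + u) / (1 - x + u)) := by
  unfold gammaQuot
  rw [← add_assoc, ← add_assoc, Complex.Gamma_add_one _ h₁, Complex.Gamma_add_one _ h₂]
  field_simp

lemma Gamma_add_ne_zero_of_re (hu : 0 < x + u.re) : Complex.Gamma (x + u) ≠ 0 :=
  Complex.Gamma_ne_zero_of_re_pos (by simpa using hu)

lemma Gamma_add_ne_zero_of_im (hu : u.im ≠ 0) : Complex.Gamma (x + u) ≠ 0 :=
  Complex.Gamma_ne_zero fun m h => hu (by simpa using congrArg Complex.im h)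

lemma norm_gammaQuot_le_inv (hx : x < 0) (hu : 1 ≤ x + u.re) :
    ‖gammaQuot x u‖ ≤ ‖(x : ℂ) + u‖⁻¹ := by
  have h := norm_Gamma_div_Gamma_add_le_inv (w := x + u) (s := 1 - 2 * x) (by simpa using hu)
    (by linarith)
  rwa [show (x : ℂ) + u + (1 - 2 * x : ℝ) = 1 - x + u by push_cast; ring] at h

lemma norm_gammaQuot_le_mul_add_one (hx : -1 / 4 < x) (hx' : x < 0) (him : 1 ≤ |u.im|) :
    ‖gammaQuot x u‖ ≤ 5 / 2 * ‖gammaQuot x (u + 1)‖ := by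
  have hnum : 1 ≤ ‖(x : ℂ) + u‖ := him.trans (by simpa using abs_im_le_norm ((x : ℂ) + u))
  have hden : ‖1 - (x : ℂ) + u‖ ≤ 5 / 2 * ‖(x : ℂ) + u‖ := calc
    ‖1 - (x : ℂ) + u‖ = ‖((1 - 2 * x : ℝ) : ℂ) + (x + u)‖ := by push_cast; ring_nf
    _ ≤ (1 - 2 * x) + ‖(x : ℂ) + u‖ := by
        refine (norm_add_le _ _).trans_eq ?_
        rw [norm_real, Real.norm_of_nonneg (by linarith)]
    _ ≤ _ := by linarith
  have hden0 : 0 < ‖1 - (x : ℂ) + u‖ := by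
    have := him.trans (by simpa using abs_im_le_norm (1 - (x : ℂ) + u))
    linarith
  rw [gammaQuot_add_one (norm_pos_iff.1 (by linarith)) (norm_pos_iff.1 hden0), norm_mul, norm_div]
  have hratio : 1 ≤ 5 / 2 * (‖(x : ℂ) + u‖ / ‖1 - (x : ℂ) + u‖) := by
    rwa [mul_div_assoc', one_le_div hden0]
  nlinarith [norm_nonneg (gammaQuot x u)]

lemma norm_gammaQuot_le (hx : -1 / 4 < x) (hx' : x < 0) (hu : 0 ≤ u.re) (him : 1 ≤ |u.im|) :
    ‖gammaQuot x u‖ ≤ 25 / 4 * ‖u + 1‖⁻¹ := by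
  have h₁ := norm_gammaQuot_le_mul_add_one hx hx' him
  have h₂ := norm_gammaQuot_le_mul_add_one (u := u + 1) hx hx' (by simpa using him)
  have h₃ := norm_gammaQuot_le_inv (u := u + 1 + 1) hx' (by simp; linarith)
  have hpos : 0 < ‖u + 1‖ := by
    have := him.trans (by simpa using abs_im_le_norm (u + 1))
    linarith
  have hnorm : ‖u + 1‖ ≤ ‖(x : ℂ) + (u + 1 + 1)‖ := by
    rw [← sq_le_sq₀ (norm_nonneg _) (norm_nonneg _), ← normSq_eq_norm_sq, ← normSq_eq_norm_sq,
      normSq_apply, normSq_apply]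
    simp only [add_re, one_re, add_im, one_im, ofReal_re, ofReal_im]
    nlinarith
  have h₄ : ‖(x : ℂ) + (u + 1 + 1)‖⁻¹ ≤ ‖u + 1‖⁻¹ := by gcongr
  linarith

lemma norm_sin_pi_mul_add_le (x : ℝ) (u : ℂ) :
    ‖sin (Real.pi * (x + u)) / Real.pi‖ ≤ Real.exp (Real.pi * |u.im|) := by
  have h := norm_sin_le_exp (Real.pi * (x + u))
  rw [im_ofReal_mul, add_im, ofReal_im, zero_add, abs_mul, abs_of_pos Real.pi_pos] at h
  rw [norm_div, norm_real, Real.norm_of_nonneg Real.pi_pos.le]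
  exact (div_le_self (norm_nonneg _) (by linarith [Real.pi_gt_three])).trans h

lemma norm_recipGammaPair_le (h : Complex.Gamma (x + u) ≠ 0) :
    ‖recipGammaPair x u‖ ≤ Real.exp (Real.pi * |u.im|) * ‖gammaQuot x u‖ := by
  rw [recipGammaPair_eq_sin_mul h, norm_mul]
  gcongr
  exact norm_sin_pi_mul_add_le x u

lemma differentiableAt_gammaQuot (hu : 0 < x + u.re) : DifferentiableAt ℂ (gammaQuot x) u := by
  have hΓ : DifferentiableAt ℂ (fun u : ℂ => Complex.Gamma (x + u)) u := by
    refine (Complex.differentiableAt_Gamma _ fun m h => ?_).comp u (by fun_prop)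
    have hre : x + u.re = -m := by simpa using congrArg Complex.re h
    linarith [m.cast_nonneg (α := ℝ)]
  have hinv : DifferentiableAt ℂ (fun u : ℂ => (Complex.Gamma (1 - x + u))⁻¹) u :=
    (Complex.differentiable_one_div_Gamma _).comp u (by fun_prop)
  exact (hΓ.fun_mul hinv).congr_of_eventuallyEq (.of_forall fun _ => div_eq_mul_inv _ _)

end GammaPair

section QuarticSum

/-- The series `∑ 2 (v + k) w(v + k)⁴` over `k ≥ 0`, a function of its starting point `v`. -/
noncomputable def quarticSum (w : ℂ → ℂ) (v : ℂ) : ℂ := ∑' k : ℕ, 2 * (v + k) * w (v + k) ^ 4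

/-- `w u = O(1 / Re u)` as `Re u → ∞`, locally uniformly in `Im u`. -/
def ReciprocalDecay (w : ℂ → ℂ) : Prop :=
  ∀ T : ℝ, ∃ C : ℝ, ∀ u : ℂ, 2 < u.re → |u.im| ≤ T → ‖w u‖ ≤ C / u.re

variable {w : ℂ → ℂ}

lemma summable_const_div_add_one_pow {p : ℕ} (hp : 1 < p) (C : ℝ) :
    Summable fun k : ℕ => C / ((k : ℝ) + 1) ^ p := by
  have h := (summable_nat_add_iff 1).2 (Real.summable_one_div_nat_pow.2 hp)
  simpa [div_eq_mul_inv] using h.mul_left C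

lemma ReciprocalDecay.exists_norm_le (hw : ReciprocalDecay w) (T : ℝ) :
    ∃ C : ℝ, ∀ v : ℂ, 2 < v.re → |v.im| ≤ T → ∀ k : ℕ,
      ‖2 * (v + k) * w (v + k) ^ 4‖ ≤ C / ((k : ℝ) + 1) ^ 3 := by
  obtain ⟨C, hC⟩ := hw T
  refine ⟨2 * (1 + T) * C ^ 4, fun v hv hvT k => ?_⟩
  have hre : (v + k).re = v.re + k := by simp
  have hk : (k : ℝ) + 1 ≤ (v + k).re := by linarith
  have hk0 : (0 : ℝ) < k + 1 := by positivity
  have hpos : 0 < (v + k).re := hk0.trans_le hk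
  have him : |(v + k).im| ≤ T := by simpa using hvT
  have hT : 0 ≤ T := (abs_nonneg _).trans hvT
  have hnorm : ‖v + k‖ ≤ (1 + T) * (v + k).re := by
    refine (norm_le_abs_re_add_abs_im _).trans ?_
    rw [abs_of_pos hpos]
    nlinarith [k.cast_nonneg (α := ℝ)]
  calc ‖2 * (v + k) * w (v + k) ^ 4‖ = 2 * ‖v + k‖ * ‖w (v + k)‖ ^ 4 := by
        rw [norm_mul, norm_mul, norm_pow, Complex.norm_two]
    _ ≤ 2 * ((1 + T) * (v + k).re) * (C / (v + k).re) ^ 4 := by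
        gcongr
        exact hC _ (by rw [hre]; linarith [k.cast_nonneg (α := ℝ)]) him
    _ = 2 * (1 + T) * C ^ 4 / (v + k).re ^ 3 := by field_simp
    _ ≤ _ := by gcongr

lemma ReciprocalDecay.summable (hw : ReciprocalDecay w) (v : ℂ) :
    Summable fun k : ℕ => 2 * (v + k) * w (v + k) ^ 4 := by
  obtain ⟨m, hm⟩ := exists_nat_gt (2 - v.re)
  obtain ⟨C, hC⟩ := hw.exists_norm_le |v.im|
  rw [← summable_nat_add_iff m]
  refine .of_norm_bounded (summable_const_div_add_one_pow (p := 3) (by norm_num) C) fun k => ?_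
  have h := hC (v + m) (by simp; linarith) (by simp) k
  rwa [add_assoc, add_comm (m : ℂ), ← Nat.cast_add] at h

lemma ReciprocalDecay.quarticSum_eq_sum_add (hw : ReciprocalDecay w) (m : ℕ) (v : ℂ) :
    quarticSum w v =
      ∑ k ∈ Finset.range m, 2 * (v + k) * w (v + k) ^ 4 + quarticSum w (v + m) := by
  rw [quarticSum, ← (hw.summable v).sum_add_tsum_nat_add m, quarticSum]
  refine congrArg _ (tsum_congr fun k => ?_)
  rw [Nat.cast_add, add_comm (k : ℂ), ← add_assoc]

lemma ReciprocalDecay.differentiableAt_of_two_lt_re (hw : ReciprocalDecay w)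
    (hd : ∀ u : ℂ, 2 < u.re → DifferentiableAt ℂ w u) {v : ℂ} (hv : 2 < v.re) :
    DifferentiableAt ℂ (quarticSum w) v := by
  obtain ⟨C, hC⟩ := hw.exists_norm_le (|v.im| + 1)
  set U : Set ℂ := {u | 2 < u.re} ∩ {u | |u.im| < |v.im| + 1}
  have hopen : IsOpen U := (isOpen_lt continuous_const continuous_re).inter
    (isOpen_lt continuous_im.abs continuous_const)
  refine (differentiableOn_tsum_of_summable_norm
    (summable_const_div_add_one_pow (p := 3) (by norm_num) C) (fun k u hu => ?_) hopen
    fun k u hu => hC u hu.1 hu.2.le k).differentiableAt (hopen.mem_nhds ⟨hv, by simp⟩)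
  have huk : 2 < (u + k).re := by
    have : 2 < u.re := hu.1
    rw [add_re, natCast_re]
    linarith [k.cast_nonneg (α := ℝ)]
  have : DifferentiableAt ℂ (fun u : ℂ => w (u + k)) u :=
    (hd _ huk).comp u (differentiableAt_id.add_const _)
  have : DifferentiableAt ℂ (fun u : ℂ => 2 * (u + k) * w (u + k) ^ 4) u := by fun_prop
  exact this.differentiableWithinAt

lemma ReciprocalDecay.differentiable_quarticSum (hw : ReciprocalDecay w)
    (hd : Differentiable ℂ w) : Differentiable ℂ (quarticSum w) := by
  intro v
  obtain ⟨m, hm⟩ := exists_nat_gt (2 - v.re)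
  have htail : DifferentiableAt ℂ (fun v => quarticSum w (v + m)) v :=
    (hw.differentiableAt_of_two_lt_re (fun u _ => hd u) (v := v + m) (by simp; linarith)).comp v
      (differentiableAt_id.add_const _)
  have hsum : Differentiable ℂ fun v : ℂ =>
      ∑ k ∈ Finset.range m, 2 * (v + k) * w (v + k) ^ 4 := by fun_prop
  exact ((hsum v).add htail).congr_of_eventuallyEq (.of_forall (hw.quarticSum_eq_sum_add m))

end QuarticSum

section QuarticSumGamma

variable {x : ℝ}

lemma reciprocalDecay_gammaQuot (hx : -1 / 4 < x) (hx' : x < 0) :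
    ReciprocalDecay (gammaQuot x) := by
  refine fun T => ⟨2, fun u hu _ => (norm_gammaQuot_le_inv hx' (by linarith)).trans ?_⟩
  have hre : x + u.re ≤ ‖(x : ℂ) + u‖ := by simpa using re_le_norm ((x : ℂ) + u)
  rw [← one_div]
  refine div_le_of_le_mul₀ (norm_nonneg _) (by positivity) ?_
  rw [div_mul_eq_mul_div, one_le_div (by linarith)]
  linarith

lemma reciprocalDecay_recipGammaPair (hx : -1 / 4 < x) (hx' : x < 0) :
    ReciprocalDecay (recipGammaPair x) := by
  intro T
  obtain ⟨C, hC⟩ := reciprocalDecay_gammaQuot hx hx' T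
  refine ⟨Real.exp (Real.pi * T) * C, fun u hu him => ?_⟩
  refine (norm_recipGammaPair_le (Gamma_add_ne_zero_of_re (by linarith))).trans ?_
  rw [mul_div_assoc]
  gcongr
  exact hC u hu him

lemma quarticSum_recipGammaPair_eq_sin_mul {v : ℂ}
    (hv : ∀ k : ℕ, Complex.Gamma (x + (v + k)) ≠ 0) :
    quarticSum (recipGammaPair x) v =
      (sin (Real.pi * (x + v)) / Real.pi) ^ 4 * quarticSum (gammaQuot x) v := by
  rw [quarticSum, quarticSum, ← tsum_mul_left]
  refine tsum_congr fun k => ?_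
  have hsin : sin (Real.pi * (x + (v + k))) ^ 4 = sin (Real.pi * (x + v)) ^ 4 := by
    rw [show (Real.pi : ℂ) * (x + (v + k)) = Real.pi * (x + v) + k * Real.pi by ring,
      sin_antiperiodic.add_nat_mul_eq, mul_pow, ← pow_mul, mul_comm k, pow_mul]
    norm_num
  rw [recipGammaPair_eq_sin_mul (hv k), mul_pow, div_pow, div_pow, hsin]
  ring

lemma exists_norm_quarticSum_gammaQuot_le (hx : -1 / 4 < x) (hx' : x < 0) :
    ∃ C, ∀ v : ℂ, 0 ≤ v.re → 1 ≤ |v.im| → ‖quarticSum (gammaQuot x) v‖ ≤ C / |v.im| := by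
  refine ⟨∑' k : ℕ, 2 * (25 / 4) ^ 4 / ((k : ℝ) + 1) ^ 2, fun v hv him => ?_⟩
  rw [← tsum_div_const]
  refine tsum_of_norm_bounded (((summable_const_div_add_one_pow (p := 2) (by norm_num)
    _).div_const _).hasSum) fun k => ?_
  have : 0 < |v.im| := by linarith
  have hre : ((k : ℝ) + 1) ≤ ‖v + k + 1‖ := by
    have : v.re + k + 1 ≤ ‖v + k + 1‖ := by simpa using re_le_norm (v + k + 1)
    linarith
  have him' : |v.im| ≤ ‖v + k + 1‖ := by simpa using abs_im_le_norm (v + k + 1)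
  have hpos : 0 < ‖v + k + 1‖ := by linarith
  have hle : ‖v + k‖ ≤ ‖v + k + 1‖ := by
    rw [← sq_le_sq₀ (norm_nonneg _) (norm_nonneg _), ← normSq_eq_norm_sq, ← normSq_eq_norm_sq,
      normSq_apply, normSq_apply]
    simp only [add_re, one_re, add_im, one_im, natCast_re, natCast_im]
    nlinarith [k.cast_nonneg (α := ℝ)]
  have hγ := norm_gammaQuot_le (u := v + k) hx hx' (by rw [add_re, natCast_re]; positivity)
    (by simpa using him)
  calc ‖2 * (v + k) * gammaQuot x (v + k) ^ 4‖ = 2 * ‖v + k‖ * ‖gammaQuot x (v + k)‖ ^ 4 := by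
        rw [norm_mul, norm_mul, norm_pow, Complex.norm_two]
    _ ≤ 2 * ‖v + k + 1‖ * (25 / 4 * ‖v + k + 1‖⁻¹) ^ 4 := by gcongr
    _ = 2 * (25 / 4) ^ 4 / (‖v + k + 1‖ ^ 2 * ‖v + k + 1‖) := by field_simp
    _ ≤ 2 * (25 / 4) ^ 4 / (((k : ℝ) + 1) ^ 2 * |v.im|) := by gcongr
    _ = _ := by rw [div_div]

lemma exists_norm_quarticSum_recipGammaPair_le (hx : -1 / 4 < x) (hx' : x < 0) :
    ∃ C, ∀ v : ℂ, 0 ≤ v.re → 1 ≤ |v.im| →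
      ‖quarticSum (recipGammaPair x) v‖ ≤ C / |v.im| * Real.exp (4 * Real.pi * |v.im|) := by
  obtain ⟨C, hC⟩ := exists_norm_quarticSum_gammaQuot_le hx hx'
  refine ⟨C, fun v hv him => ?_⟩
  have hv0 : v.im ≠ 0 := by rintro h; norm_num [h] at him
  rw [quarticSum_recipGammaPair_eq_sin_mul fun k => Gamma_add_ne_zero_of_im (by simpa using hv0),
    norm_mul, norm_pow, mul_comm, mul_assoc 4]
  rw [show Real.exp (4 * (Real.pi * |v.im|)) = Real.exp (Real.pi * |v.im|) ^ 4 from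
    mod_cast Real.exp_nat_mul (Real.pi * |v.im|) 4]
  gcongr
  exacts [(norm_nonneg _).trans (hC v hv him), hC v hv him, norm_sin_pi_mul_add_le x v]

end QuarticSumGamma

section AcceleratedSeries

lemma sinh_le_mul_exp (w : ℝ) : Real.sinh w ≤ w * Real.exp w := by
  have h : Real.exp (-w) = Real.exp w * Real.exp (-(2 * w)) := by
    rw [← Real.exp_add]; congr 1; ring
  rw [Real.sinh_eq, h]
  nlinarith [Real.exp_pos w, Real.add_one_le_exp (-(2 * w))]

lemma norm_eulerSinProduct_mul_I {z : ℝ} (hz : 0 ≤ z) (n : ℕ) :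
    ‖(Real.pi : ℂ) * (z * I) *
      ∏ j ∈ Finset.range n, (1 - (z * I : ℂ) ^ 2 / ((j : ℂ) + 1) ^ 2)‖ =
      Real.pi * z * ∏ j ∈ Finset.range n, (1 + z ^ 2 / ((j : ℝ) + 1) ^ 2) := by
  have h : ∏ j ∈ Finset.range n, (1 - (z * I : ℂ) ^ 2 / ((j : ℂ) + 1) ^ 2) =
      ((∏ j ∈ Finset.range n, (1 + z ^ 2 / ((j : ℝ) + 1) ^ 2) : ℝ) : ℂ) := by
    push_cast
    refine Finset.prod_congr rfl fun j _ => ?_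
    rw [mul_pow, I_sq]
    ring
  rw [h, norm_mul, norm_mul, norm_mul, norm_I, mul_one, norm_real, norm_real, norm_real,
    Real.norm_of_nonneg Real.pi_pos.le, Real.norm_of_nonneg hz,
    Real.norm_of_nonneg (Finset.prod_nonneg fun j _ => by positivity)]

lemma prod_one_add_sq_div_sq_le_exp {z : ℝ} (hz : 0 ≤ z) (n : ℕ) :
    ∏ j ∈ Finset.range n, (1 + z ^ 2 / ((j : ℝ) + 1) ^ 2) ≤ Real.exp (Real.pi * z) := by
  rcases hz.eq_or_lt with rfl | hz
  · simp
  have hmono : Monotone fun n : ℕ => ∏ j ∈ Finset.range n, (1 + z ^ 2 / ((j : ℝ) + 1) ^ 2) := by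
    refine monotone_nat_of_le_succ fun n => ?_
    rw [Finset.prod_range_succ]
    refine le_mul_of_one_le_right (Finset.prod_nonneg fun j _ => by positivity) ?_
    exact le_add_of_nonneg_right (by positivity)
  have hsinh : ‖sin (Real.pi * (z * I))‖ = Real.sinh (Real.pi * z) := by
    rw [← mul_assoc, sin_mul_I, norm_mul, norm_I, mul_one, ← ofReal_mul, ← ofReal_sinh, norm_real,
      Real.norm_of_nonneg (Real.sinh_nonneg_iff.2 (by positivity))]
  have hlim := (Complex.tendsto_euler_sin_prod (z * I)).norm
  simp only [norm_eulerSinProduct_mul_I hz.le, hsinh] at hlim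
  refine le_of_mul_le_mul_left (a := Real.pi * z) ?_ (by positivity)
  exact ((hmono.const_mul (by positivity)).ge_of_tendsto hlim n).trans
    (sinh_le_mul_exp _)

lemma exists_one_add_pow_le_exp (k : ℕ) {ε : ℝ} (hε : 0 < ε) :
    ∃ C > 0, ∀ s : ℝ, 0 ≤ s → (1 + s) ^ k ≤ C * Real.exp (ε * s) := by
  set δ := ε / (k + 1) with hδ
  have hδ0 : 0 < δ := by positivity
  refine ⟨(1 + 1 / δ) ^ k, by positivity, fun s hs => ?_⟩
  have h1 : 1 + s ≤ (1 + 1 / δ) * Real.exp (δ * s) := by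
    calc 1 + s ≤ 1 + s + (δ * s + 1 / δ) := le_add_of_nonneg_right (by positivity)
      _ = (1 + 1 / δ) * (δ * s + 1) := by field_simp; ring
      _ ≤ _ := by gcongr; exact Real.add_one_le_exp _
  have h2 : (k : ℝ) * δ ≤ ε := by
    rw [hδ, mul_div_assoc', div_le_iff₀ (by positivity)]
    nlinarith
  calc (1 + s) ^ k ≤ ((1 + 1 / δ) * Real.exp (δ * s)) ^ k := by gcongr
    _ = (1 + 1 / δ) ^ k * Real.exp (k * δ * s) := by rw [mul_pow, ← Real.exp_nat_mul, mul_assoc]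
    _ ≤ _ := by gcongr

lemma exists_le_mul_pow {u : ℕ → ℝ} (hu : ∀ n, 0 ≤ u n) {q : ℝ} (hq : 0 < q)
    (h : ∀ᶠ n in atTop, u (n + 1) ≤ q * u n) : ∃ C > 0, ∀ n, u n ≤ C * q ^ n := by
  obtain ⟨N, hN⟩ := eventually_atTop.1 h
  set C := ∑ i ∈ Finset.range (N + 1), u i / q ^ i + 1
  have hterm : ∀ i ∈ Finset.range (N + 1), 0 ≤ u i / q ^ i := fun i _ =>
    div_nonneg (hu i) (by positivity)
  have hC : 0 < C := add_pos_of_nonneg_of_pos (Finset.sum_nonneg hterm) one_pos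
  have hsmall : ∀ n ≤ N, u n ≤ C * q ^ n := fun n hn => by
    rw [← div_le_iff₀ (by positivity)]
    exact (Finset.single_le_sum hterm (Finset.mem_range.2 (by omega))).trans
      (le_add_of_nonneg_right zero_le_one)
  refine ⟨C, hC, fun n => (le_total n N).elim (hsmall n) fun hn => ?_⟩
  induction n, hn using Nat.le_induction with
  | base => exact hsmall N le_rfl
  | succ n hn ih =>
    calc u (n + 1) ≤ q * (C * q ^ n) := (hN n hn).trans (by gcongr)
      _ = C * q ^ (n + 1) := by ring

/-- The ratio of consecutive weights in the accelerated series. -/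
noncomputable def wzRatio (N : ℝ) : ℝ :=
  (N + 1 / 4) * (N + 3 / 4) / (16 * N ^ 5 * (N + 1 / 2) ^ 5)

/-- The weights `∏_{j < n} wzRatio (x + j)` of the accelerated series. -/
noncomputable def wzWeight (x : ℝ) (n : ℕ) : ℝ := ∏ j ∈ Finset.range n, wzRatio (x + j)

/-- The rational certificate of the Wilf–Zeilberger pair behind the accelerated series; at `y = 0`
it reduces to the quadratic factor `120 N ^ 2 + 34 N + 3` of the theorem, up to `-1 / (512 N ^ 5)`.
-/
noncomputable def wzCert (N : ℝ) (y : ℂ) : ℂ :=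
  (-(120 * N ^ 2 + 34 * N + 3) + (88 * N ^ 2 + 58 * N + 7) * y ^ 2 / (N + 1 / 2) ^ 2 -
    (40 * N ^ 2 + 30 * N + 5) * y ^ 4 / (N + 1 / 2) ^ 4 +
    (8 * N + 2) * y ^ 6 / (N + 1 / 2) ^ 5) / (512 * N ^ 5)

/-- The `n`-th term of the accelerated series, deformed by a complex parameter `y`. -/
noncomputable def wzTerm (x : ℝ) (n : ℕ) (y : ℂ) : ℂ :=
  wzWeight x n * wzCert (x + n) y *
    ∏ j ∈ Finset.range n, (((1 / 2 + x + j : ℝ) : ℂ) ^ 2 - y ^ 2) ^ 4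

/-- The accelerated series deformed by `y`; at `y = 0` it is a multiple of the original series. -/
noncomputable def wzSum (x : ℝ) (y : ℂ) : ℂ := ∑' n : ℕ, wzTerm x n y

lemma wzCert_add_one {N : ℝ} (h₁ : N ≠ 0) (h₂ : N + 1 / 2 ≠ 0) (y : ℂ) :
    wzCert N (y + 1) * (N + (y + 1 / 2)) ^ 4 - wzCert N y * (N - (y + 1 / 2)) ^ 4 =
      2 * (y + 1 / 2) * (wzRatio N * ((N : ℂ) ^ 2 - (y + 1 / 2) ^ 2) ^ 4 - 1) := by
  have h₁' : (N : ℂ) ≠ 0 := by exact_mod_cast h₁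
  have h₂' : (N : ℂ) * 2 + 1 ≠ 0 := by
    have : N * 2 + 1 ≠ 0 := fun h => h₂ (by linarith)
    exact_mod_cast this
  unfold wzCert wzRatio
  push_cast
  field_simp
  ring

lemma wzTerm_neg (x : ℝ) (n : ℕ) (y : ℂ) : wzTerm x n (-y) = wzTerm x n y := by
  simp only [wzTerm, wzCert, Even.neg_pow (by decide : Even 2), Even.neg_pow (by decide : Even 4),
    Even.neg_pow (by decide : Even 6)]

lemma wzSum_neg (x : ℝ) (y : ℂ) : wzSum x (-y) = wzSum x y := by
  simp only [wzSum, wzTerm_neg]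

lemma differentiable_wzTerm (x : ℝ) (n : ℕ) : Differentiable ℂ (wzTerm x n) := by
  unfold wzTerm wzCert
  fun_prop

lemma wzCert_eq_inv {N : ℝ} (h : N ≠ 0) (y : ℂ) : wzCert N y =
    ((-(120 * N⁻¹ ^ 3 + 34 * N⁻¹ ^ 4 + 3 * N⁻¹ ^ 5) * (N + 1 / 2)⁻¹ ^ 0 / 512 : ℝ) : ℂ) * y ^ 0 +
    (((88 * N⁻¹ ^ 3 + 58 * N⁻¹ ^ 4 + 7 * N⁻¹ ^ 5) * (N + 1 / 2)⁻¹ ^ 2 / 512 : ℝ) : ℂ) * y ^ 2 +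
    ((-(40 * N⁻¹ ^ 3 + 30 * N⁻¹ ^ 4 + 5 * N⁻¹ ^ 5) * (N + 1 / 2)⁻¹ ^ 4 / 512 : ℝ) : ℂ) * y ^ 4 +
    (((8 * N⁻¹ ^ 4 + 2 * N⁻¹ ^ 5) * (N + 1 / 2)⁻¹ ^ 5 / 512 : ℝ) : ℂ) * y ^ 6 := by
  have h' : (N : ℂ) ≠ 0 := by exact_mod_cast h
  unfold wzCert
  push_cast
  field_simp
  ring

lemma abs_pow_le_pow_of_le {i L : ℝ} (hL : 1 ≤ L) (h : |i| ≤ L) {k m : ℕ} (hk : k ≤ m) :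
    |i ^ k| ≤ L ^ m := by
  rw [abs_pow]
  exact (pow_le_pow_left₀ (abs_nonneg _) h k).trans (pow_le_pow_right₀ hL hk)

lemma norm_wzCert_le {N L : ℝ} (hN : N ≠ 0) (hL : 1 ≤ L) (h₁ : |N⁻¹| ≤ L)
    (h₂ : |(N + 1 / 2)⁻¹| ≤ L) (y : ℂ) : ‖wzCert N y‖ ≤ 4 * L ^ 10 * (1 + ‖y‖) ^ 6 := by
  rw [wzCert_eq_inv hN y]
  set i := N⁻¹
  set e := (N + 1 / 2)⁻¹
  have hterm : ∀ a : ℝ, |a| ≤ 512 * L ^ 5 → ∀ k ≤ 5, ∀ m ≤ 6,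
      ‖((a * e ^ k / 512 : ℝ) : ℂ) * y ^ m‖ ≤ L ^ 10 * (1 + ‖y‖) ^ 6 := by
    intro a ha k hk m hm
    rw [norm_mul, norm_real, Real.norm_eq_abs, norm_pow, abs_div, abs_mul,
      abs_of_pos (by norm_num : (0 : ℝ) < 512)]
    have hy : ‖y‖ ^ m ≤ (1 + ‖y‖) ^ 6 :=
      (pow_le_pow_left₀ (norm_nonneg y) (by linarith) m).trans
        (pow_le_pow_right₀ (by linarith [norm_nonneg y]) hm)
    calc |a| * |e ^ k| / 512 * ‖y‖ ^ m
        ≤ 512 * L ^ 5 * L ^ 5 / 512 * (1 + ‖y‖) ^ 6 := by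
          gcongr
          exact abs_pow_le_pow_of_le hL h₂ hk
      _ = _ := by ring
  have hL5 : 1 ≤ L ^ 5 := one_le_pow₀ hL
  have hi : ∀ k ≤ 5, -L ^ 5 ≤ i ^ k ∧ i ^ k ≤ L ^ 5 := fun k hk =>
    abs_le.1 (abs_pow_le_pow_of_le hL h₁ hk)
  obtain ⟨l3, u3⟩ := hi 3 (by norm_num)
  obtain ⟨l4, u4⟩ := hi 4 (by norm_num)
  obtain ⟨l5, u5⟩ := hi 5 (by norm_num)
  calc _ ≤ L ^ 10 * (1 + ‖y‖) ^ 6 + L ^ 10 * (1 + ‖y‖) ^ 6 + L ^ 10 * (1 + ‖y‖) ^ 6 +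
        L ^ 10 * (1 + ‖y‖) ^ 6 := by
        refine norm_add_le_of_le (norm_add_le_of_le (norm_add_le_of_le ?_ ?_) ?_) ?_ <;>
          refine hterm _ (abs_le.2 ⟨?_, ?_⟩) _ (by norm_num) _ (by norm_num) <;> linarith
    _ = _ := by ring

variable {x : ℝ}

lemma add_natCast_ne_zero (hx : -1 / 4 < x) (hx0 : x ≠ 0) (n : ℕ) : x + n ≠ 0 := by
  rcases n with _ | n
  · simpa using hx0
  · push_cast
    linarith [n.cast_nonneg (α := ℝ)]

lemma exists_norm_wzCert_le (hx : -1 / 4 < x) (hx0 : x ≠ 0) :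
    ∃ C > 0, ∀ (n : ℕ) (y : ℂ), ‖wzCert (x + n) y‖ ≤ C * (1 + ‖y‖) ^ 6 := by
  set L := |x⁻¹| + 4
  have hL4 : 4 ≤ L := by linarith [abs_nonneg x⁻¹]
  have hinv : ∀ t : ℝ, 1 / 4 ≤ t → |t⁻¹| ≤ L := fun t ht => by
    rw [abs_inv, abs_of_pos (by linarith)]
    exact (inv_le_of_inv_le₀ (by norm_num) (by linarith)).trans hL4
  refine ⟨4 * L ^ 10, by positivity, fun n y =>
    norm_wzCert_le (add_natCast_ne_zero hx hx0 n) (by linarith) ?_ (hinv _ ?_) y⟩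
  · rcases n with _ | n
    · rw [Nat.cast_zero, add_zero]; linarith
    · exact hinv _ (by push_cast; linarith [n.cast_nonneg (α := ℝ)])
  · linarith [n.cast_nonneg (α := ℝ)]

lemma wzRatio_mul_pow_le {N : ℝ} (hN : 10 ≤ N) : wzRatio N * (N + 1 / 2) ^ 8 ≤ 3 / 32 := by
  have h : wzRatio N * (N + 1 / 2) ^ 8 =
      (N + 1 / 4) * (N + 3 / 4) * (N + 1 / 2) ^ 3 / (16 * N ^ 5) := by
    unfold wzRatio
    field_simp
  rw [h, div_le_iff₀ (by positivity)]
  calc (N + 1 / 4) * (N + 3 / 4) * (N + 1 / 2) ^ 3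
      ≤ (43 / 40 * N) * (43 / 40 * N) * (43 / 40 * N) ^ 3 := by
        gcongr <;> linarith
    _ = (43 / 40) ^ 5 * N ^ 5 := by ring
    _ ≤ 3 / 2 * N ^ 5 := by gcongr; norm_num
    _ = _ := by ring

lemma exists_abs_wzWeight_mul_le (hx : -1 / 4 < x) : ∃ C > 0, ∀ n : ℕ,
    |wzWeight x n| * ∏ j ∈ Finset.range n, (1 / 2 + x + j) ^ 8 ≤ C * (3 / 32) ^ n := by
  have hnn : ∀ n : ℕ, 0 ≤ |wzWeight x n| * ∏ j ∈ Finset.range n, (1 / 2 + x + j) ^ 8 := fun n =>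
    mul_nonneg (abs_nonneg _) (Finset.prod_nonneg fun j _ => by positivity)
  refine exists_le_mul_pow hnn (by norm_num) ?_
  filter_upwards [eventually_ge_atTop 11] with n hn
  have hN : 10 ≤ x + n := by
    have : (11 : ℝ) ≤ n := by exact_mod_cast hn
    linarith
  have hratio : 0 ≤ wzRatio (x + n) := by unfold wzRatio; positivity
  have h := mul_le_mul_of_nonneg_right (wzRatio_mul_pow_le hN) (hnn n)
  rw [show x + (n : ℝ) + 1 / 2 = 1 / 2 + x + n by ring] at h
  rw [wzWeight, Finset.prod_range_succ, Finset.prod_range_succ, ← wzWeight, abs_mul,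
    abs_of_nonneg hratio]
  linarith

lemma prod_one_add_sq_div_le (hx : -1 / 4 < x) {z : ℝ} (hz : 0 ≤ z) (n : ℕ) :
    ∏ j ∈ Finset.range n, (1 + z ^ 2 / (1 / 2 + x + j) ^ 2) ≤
      (1 + 16 * z ^ 2) * Real.exp (Real.pi * z) := by
  rcases n with _ | n
  · rw [Finset.prod_range_zero]
    exact one_le_mul_of_one_le_of_one_le (le_add_of_nonneg_right (by positivity))
      (Real.one_le_exp (by positivity))
  rw [Finset.prod_range_succ', mul_comm]
  have hhead : 1 + z ^ 2 / (1 / 2 + x + (0 : ℕ)) ^ 2 ≤ 1 + 16 * z ^ 2 := by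
    calc 1 + z ^ 2 / (1 / 2 + x + (0 : ℕ)) ^ 2 ≤ 1 + z ^ 2 / (1 / 4) ^ 2 := by
          gcongr
          push_cast
          linarith
      _ = _ := by ring
  have htail : ∏ j ∈ Finset.range n, (1 + z ^ 2 / (1 / 2 + x + ((j + 1 : ℕ) : ℝ)) ^ 2) ≤
      Real.exp (Real.pi * z) := by
    refine le_trans (Finset.prod_le_prod (fun j _ => by positivity) fun j _ => ?_)
      (prod_one_add_sq_div_sq_le_exp hz n)
    have h : (j : ℝ) + 1 ≤ 1 / 2 + x + ((j + 1 : ℕ) : ℝ) := by push_cast; linarith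
    gcongr
  exact mul_le_mul hhead htail (Finset.prod_nonneg fun j _ => by positivity) (by positivity)

lemma norm_sq_sub_sq_pow_four_le {b : ℝ} (hb : b ≠ 0) (y : ℂ) :
    ‖((b : ℂ) ^ 2 - y ^ 2) ^ 4‖ ≤
      b ^ 8 * (81 / 16) * (1 + (5 / 6 * ‖y‖) ^ 2 / b ^ 2) ^ 4 := by
  have h : ‖(b : ℂ) ^ 2 - y ^ 2‖ ≤ b ^ 2 * (3 / 2) * (1 + (5 / 6 * ‖y‖) ^ 2 / b ^ 2) := by
    calc ‖(b : ℂ) ^ 2 - y ^ 2‖ ≤ ‖(b : ℂ) ^ 2‖ + ‖y ^ 2‖ := norm_sub_le _ _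
      _ = b ^ 2 + ‖y‖ ^ 2 := by
        rw [norm_pow, norm_pow, norm_real, Real.norm_eq_abs, sq_abs]
      _ ≤ 3 / 2 * b ^ 2 + 3 / 2 * (5 / 6 * ‖y‖) ^ 2 := by
        linarith [sq_nonneg b, sq_nonneg ‖y‖]
      _ = _ := by field_simp
  rw [norm_pow]
  calc _ ≤ (b ^ 2 * (3 / 2) * (1 + (5 / 6 * ‖y‖) ^ 2 / b ^ 2)) ^ 4 := by gcongr
    _ = _ := by ring

lemma norm_prod_sq_sub_sq_le (hx : -1 / 4 < x) (n : ℕ) (y : ℂ) :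
    ‖∏ j ∈ Finset.range n, (((1 / 2 + x + j : ℝ) : ℂ) ^ 2 - y ^ 2) ^ 4‖ ≤
      (∏ j ∈ Finset.range n, (1 / 2 + x + j) ^ 8) * (81 / 16) ^ n *
        ((1 + 16 * (5 / 6 * ‖y‖) ^ 2) * Real.exp (Real.pi * (5 / 6 * ‖y‖))) ^ 4 := by
  rw [norm_prod]
  have hb : ∀ j : ℕ, 1 / 2 + x + j ≠ 0 := fun j =>
    ne_of_gt (by linarith [j.cast_nonneg (α := ℝ)])
  refine (Finset.prod_le_prod (fun j _ => norm_nonneg _) fun j _ =>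
    norm_sq_sub_sq_pow_four_le (hb j) y).trans ?_
  rw [Finset.prod_mul_distrib, Finset.prod_mul_distrib, Finset.prod_const, Finset.card_range,
    Finset.prod_pow _ 4]
  have : 0 ≤ ∏ j ∈ Finset.range n, (1 + (5 / 6 * ‖y‖) ^ 2 / (1 / 2 + x + j) ^ 2) :=
    Finset.prod_nonneg fun j _ => by positivity
  have : 0 ≤ ∏ j ∈ Finset.range n, (1 / 2 + x + j) ^ 8 :=
    Finset.prod_nonneg fun j _ => by positivity
  gcongr
  exact prod_one_add_sq_div_le hx (by positivity) n

lemma one_add_sq_pow_mul_le {s : ℝ} (hs : 0 ≤ s) :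
    (1 + 16 * (5 / 6 * s) ^ 2) ^ 4 * (1 + s) ^ 6 ≤ 16 ^ 4 * (1 + s) ^ 14 := by
  have h : 1 + 16 * (5 / 6 * s) ^ 2 ≤ 16 * (1 + s) ^ 2 := by nlinarith
  calc _ ≤ (16 * (1 + s) ^ 2) ^ 4 * (1 + s) ^ 6 := by gcongr
    _ = _ := by ring

lemma exists_norm_wzTerm_le (hx : -1 / 4 < x) (hx0 : x ≠ 0) :
    ∃ C > 0, ∀ (n : ℕ) (y : ℂ),
      ‖wzTerm x n y‖ ≤ C * Real.exp (7 / 2 * Real.pi * ‖y‖) * (1 / 2) ^ n := by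
  obtain ⟨C₁, hC₁, hcert⟩ := exists_norm_wzCert_le hx hx0
  obtain ⟨C₂, hC₂, hweight⟩ := exists_abs_wzWeight_mul_le hx
  obtain ⟨C₃, hC₃, hexp⟩ := exists_one_add_pow_le_exp 14 (ε := Real.pi / 6) (by positivity)
  refine ⟨C₁ * C₂ * (16 ^ 4 * C₃), by positivity, fun n y => ?_⟩
  set s := ‖y‖
  set E := Real.exp (Real.pi * (5 / 6 * s))
  set B := ∏ j ∈ Finset.range n, (1 / 2 + x + j) ^ 8
  have hs : 0 ≤ s := norm_nonneg y
  have hpoly := (one_add_sq_pow_mul_le hs).trans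
    (mul_le_mul_of_nonneg_left (hexp s hs) (by norm_num))
  have hE : Real.exp (Real.pi / 6 * s) * E ^ 4 = Real.exp (7 / 2 * Real.pi * s) := by
    rw [← Real.exp_nat_mul, ← Real.exp_add]
    congr 1
    push_cast
    ring
  have hgeo : (3 / 32 : ℝ) ^ n * (81 / 16) ^ n ≤ (1 / 2) ^ n := by
    rw [← mul_pow]
    gcongr
    norm_num
  rw [wzTerm, norm_mul, norm_mul, norm_real, Real.norm_eq_abs]
  calc |wzWeight x n| * ‖wzCert (x + n) y‖ * _
      ≤ |wzWeight x n| * (C₁ * (1 + s) ^ 6) *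
        (B * (81 / 16) ^ n * ((1 + 16 * (5 / 6 * s) ^ 2) * E) ^ 4) := by
        gcongr
        · exact hcert n y
        · exact norm_prod_sq_sub_sq_le hx n y
    _ = C₁ * (|wzWeight x n| * B) * (81 / 16) ^ n *
        ((1 + 16 * (5 / 6 * s) ^ 2) ^ 4 * (1 + s) ^ 6) * E ^ 4 := by ring
    _ ≤ C₁ * (C₂ * (3 / 32) ^ n) * (81 / 16) ^ n *
        (16 ^ 4 * (C₃ * Real.exp (Real.pi / 6 * s))) * E ^ 4 := by
        have := hweight n
        gcongr
    _ = C₁ * C₂ * (16 ^ 4 * C₃) * (Real.exp (Real.pi / 6 * s) * E ^ 4) *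
        ((3 / 32) ^ n * (81 / 16) ^ n) := by ring
    _ ≤ _ := by rw [hE]; gcongr

lemma summable_wzTerm (hx : -1 / 4 < x) (hx0 : x ≠ 0) (y : ℂ) :
    Summable fun n => wzTerm x n y := by
  obtain ⟨C, _, h⟩ := exists_norm_wzTerm_le hx hx0
  exact Summable.of_norm_bounded (summable_geometric_two.mul_left _) fun n => h n y

lemma exists_norm_wzSum_le (hx : -1 / 4 < x) (hx0 : x ≠ 0) :
    ∃ C > 0, ∀ y : ℂ, ‖wzSum x y‖ ≤ C * Real.exp (7 / 2 * Real.pi * ‖y‖) := by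
  obtain ⟨C, hC, h⟩ := exists_norm_wzTerm_le hx hx0
  refine ⟨C * 2, by positivity, fun y => ?_⟩
  rw [mul_right_comm]
  exact tsum_of_norm_bounded (hasSum_geometric_two.mul_left _) fun n => h n y

lemma differentiable_wzSum (hx : -1 / 4 < x) (hx0 : x ≠ 0) : Differentiable ℂ (wzSum x) := by
  obtain ⟨C, hC, h⟩ := exists_norm_wzTerm_le hx hx0
  intro y
  have hball : DifferentiableOn ℂ (wzSum x) (Metric.ball 0 (‖y‖ + 1)) := by
    refine differentiableOn_tsum_of_summable_norm
      (summable_geometric_two.mul_left (C * Real.exp (7 / 2 * Real.pi * (‖y‖ + 1))))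
      (fun n => (differentiable_wzTerm x n).differentiableOn) Metric.isOpen_ball fun n u hu => ?_
    have hu' : ‖u‖ ≤ ‖y‖ + 1 := by simpa using (Metric.mem_ball.1 hu).le
    exact (h n u).trans (by gcongr)
  exact hball.differentiableAt (Metric.isOpen_ball.mem_nhds (by simp))

/-- The partner of `wzTerm` in the Wilf–Zeilberger pair. -/
noncomputable def wzPartner (x : ℝ) (n : ℕ) (v : ℂ) : ℂ :=
  wzWeight x n * (2 * v) * ∏ j ∈ Finset.range n, (((x + j : ℝ) : ℂ) ^ 2 - v ^ 2) ^ 4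

lemma add_mul_prod_sq_sub_sq (x : ℝ) (v : ℂ) (n : ℕ) :
    (x + v) * ∏ j ∈ Finset.range n, (((1 / 2 + x + j : ℝ) : ℂ) ^ 2 - (v + 1 / 2) ^ 2) =
      (∏ j ∈ Finset.range n, (((x + j : ℝ) : ℂ) ^ 2 - v ^ 2)) * (((x + n : ℝ) : ℂ) + v) := by
  induction n with
  | zero => simp
  | succ n ih =>
    rw [Finset.prod_range_succ, ← mul_assoc, ih, Finset.prod_range_succ]
    push_cast
    ring

lemma sub_mul_prod_sq_sub_sq (x : ℝ) (v : ℂ) (n : ℕ) :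
    (x - v) * ∏ j ∈ Finset.range n, (((1 / 2 + x + j : ℝ) : ℂ) ^ 2 - (v - 1 / 2) ^ 2) =
      (∏ j ∈ Finset.range n, (((x + j : ℝ) : ℂ) ^ 2 - v ^ 2)) * (((x + n : ℝ) : ℂ) - v) := by
  have hsq : (-v + 1 / 2) ^ 2 = (v - 1 / 2) ^ 2 := by ring
  simpa only [hsq, ← sub_eq_add_neg, neg_sq] using add_mul_prod_sq_sub_sq x (-v) n

lemma wzTerm_add_one_sub (hx : -1 / 4 < x) (hx0 : x ≠ 0) (n : ℕ) (y : ℂ) :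
    (x + (y + 1 / 2)) ^ 4 * wzTerm x n (y + 1) - (x - (y + 1 / 2)) ^ 4 * wzTerm x n y =
      wzPartner x (n + 1) (y + 1 / 2) - wzPartner x n (y + 1 / 2) := by
  have hleft := add_mul_prod_sq_sub_sq x (y + 1 / 2) n
  have hright := sub_mul_prod_sq_sub_sq x (y + 1 / 2) n
  rw [add_assoc, show (1 / 2 : ℂ) + 1 / 2 = 1 by norm_num] at hleft
  rw [add_sub_cancel_right] at hright
  have hN : x + n + 1 / 2 ≠ 0 := ne_of_gt (by linarith [n.cast_nonneg (α := ℝ)])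
  have hcert := wzCert_add_one (add_natCast_ne_zero hx hx0 n) hN y
  have hterm₁ : (x + (y + 1 / 2)) ^ 4 * wzTerm x n (y + 1) =
      wzWeight x n * wzCert (x + n) (y + 1) * ((x + (y + 1 / 2)) *
        ∏ j ∈ Finset.range n, (((1 / 2 + x + j : ℝ) : ℂ) ^ 2 - (y + 1) ^ 2)) ^ 4 := by
    rw [wzTerm, Finset.prod_pow]; ring
  have hterm₀ : (x - (y + 1 / 2)) ^ 4 * wzTerm x n y =
      wzWeight x n * wzCert (x + n) y * ((x - (y + 1 / 2)) *
        ∏ j ∈ Finset.range n, (((1 / 2 + x + j : ℝ) : ℂ) ^ 2 - y ^ 2)) ^ 4 := by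
    rw [wzTerm, Finset.prod_pow]; ring
  rw [hterm₁, hterm₀, hleft, hright, wzPartner, wzPartner, Finset.prod_pow, Finset.prod_pow,
    wzWeight, wzWeight, Finset.prod_range_succ, Finset.prod_range_succ, ofReal_mul]
  linear_combination ((∏ j ∈ Finset.range n, wzRatio (x + j) : ℝ) : ℂ) *
    (∏ j ∈ Finset.range n, (((x + j : ℝ) : ℂ) ^ 2 - (y + 1 / 2) ^ 2)) ^ 4 * hcert

lemma norm_wzRatio_mul_le {N : ℝ} {v : ℂ} (hN : 10 + 4 * ‖v‖ ≤ N) :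
    ‖(wzRatio N : ℂ) * ((N : ℂ) ^ 2 - v ^ 2) ^ 4‖ ≤ 1 / 2 := by
  have hv := norm_nonneg v
  have hN0 : 0 < N := by linarith
  have hdiff : ‖(N : ℂ) ^ 2 - v ^ 2‖ ≤ 17 / 16 * N ^ 2 := by
    refine (norm_sub_le _ _).trans ?_
    rw [norm_pow, norm_pow, norm_real, Real.norm_eq_abs, sq_abs]
    nlinarith
  have hratio : wzRatio N ≤ 2 / (16 * N ^ 8) := by
    unfold wzRatio
    rw [div_le_div_iff₀ (by positivity) (by positivity)]
    have hquad : (N + 1 / 4) * (N + 3 / 4) ≤ 2 * N ^ 2 := by nlinarith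
    calc (N + 1 / 4) * (N + 3 / 4) * (16 * N ^ 8) ≤ 2 * N ^ 2 * (16 * N ^ 8) := by gcongr
      _ = 2 * (16 * N ^ 5 * N ^ 5) := by ring
      _ ≤ _ := by gcongr; linarith
  have hratio₀ : 0 ≤ wzRatio N := by unfold wzRatio; positivity
  rw [norm_mul, norm_pow, norm_real, Real.norm_of_nonneg hratio₀]
  calc wzRatio N * ‖(N : ℂ) ^ 2 - v ^ 2‖ ^ 4
      ≤ 2 / (16 * N ^ 8) * (17 / 16 * N ^ 2) ^ 4 := by gcongr
    _ = 2 / 16 * (17 / 16) ^ 4 := by field_simp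
    _ ≤ 1 / 2 := by norm_num

lemma wzPartner_succ (x : ℝ) (n : ℕ) (v : ℂ) : wzPartner x (n + 1) v =
    wzRatio (x + n) * (((x + n : ℝ) : ℂ) ^ 2 - v ^ 2) ^ 4 * wzPartner x n v := by
  rw [wzPartner, wzPartner, wzWeight, wzWeight, Finset.prod_range_succ, Finset.prod_range_succ,
    ofReal_mul]
  ring

lemma tendsto_wzPartner (x : ℝ) (v : ℂ) : Tendsto (fun n => wzPartner x n v) atTop (𝓝 0) := by
  have hstep : ∀ᶠ n : ℕ in atTop, ‖wzPartner x (n + 1) v‖ ≤ 1 / 2 * ‖wzPartner x n v‖ := by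
    filter_upwards [tendsto_natCast_atTop_atTop.eventually_ge_atTop (10 + 4 * ‖v‖ - x)] with n hn
    rw [wzPartner_succ, norm_mul]
    gcongr
    exact norm_wzRatio_mul_le (by linarith)
  obtain ⟨C, _, h⟩ := exists_le_mul_pow (fun n => norm_nonneg (wzPartner x n v)) (by norm_num) hstep
  refine squeeze_zero_norm h ?_
  simpa using (tendsto_pow_atTop_nhds_zero_of_lt_one (r := (1 / 2 : ℝ)) (by norm_num)
    (by norm_num)).const_mul C

lemma wzSum_add_one (hx : -1 / 4 < x) (hx0 : x ≠ 0) (y : ℂ) :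
    (x + (y + 1 / 2)) ^ 4 * wzSum x (y + 1) - (x - (y + 1 / 2)) ^ 4 * wzSum x y =
      -(2 * (y + 1 / 2)) := by
  have hsum := (((summable_wzTerm hx hx0 (y + 1)).hasSum.mul_left ((x + (y + 1 / 2)) ^ 4)).sub
    ((summable_wzTerm hx hx0 y).hasSum.mul_left ((x - (y + 1 / 2)) ^ 4))).tendsto_sum_nat
  have htelescope : ∀ n, ∑ i ∈ Finset.range n,
      (wzPartner x (i + 1) (y + 1 / 2) - wzPartner x i (y + 1 / 2)) =
      wzPartner x n (y + 1 / 2) - wzPartner x 0 (y + 1 / 2) :=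
    Finset.sum_range_sub fun i => wzPartner x i (y + 1 / 2)
  simp only [wzTerm_add_one_sub hx hx0, htelescope] at hsum
  have hlim := (tendsto_wzPartner x (y + 1 / 2)).sub_const (wzPartner x 0 (y + 1 / 2))
  simpa [wzSum, wzPartner, wzWeight] using tendsto_nhds_unique hsum hlim

end AcceleratedSeries

section WellPoised

/-- The product `(α + n)_k (α)_k ^ 3 / (k! (1 + n)_k ^ 3)`. -/
noncomputable def wellPoisedProd (α : ℝ) (n k : ℕ) : ℝ :=
  ∏ j ∈ Finset.range k, (α + n + j) * (α + j) ^ 3 / ((1 + j) * (1 + n + j) ^ 3)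

/-- The general term of the very-well-poised series `₅F₄(1)` with parameters
`a = α + n` and `b = c = d = α`. -/
noncomputable def wellPoisedTerm (α : ℝ) (n k : ℕ) : ℝ :=
  (α + n + 2 * k) / (α + n) * wellPoisedProd α n k

/-- The very-well-poised `₅F₄(1)` with parameters `a = α + n` and `b = c = d = α`. -/
noncomputable def wellPoisedSum (α : ℝ) (n : ℕ) : ℝ := ∑' k, wellPoisedTerm α n k

/-- The telescoping partner of `wellPoisedTerm` with respect to the shift `n ↦ n + 1`. -/
noncomputable def wellPoisedPartner (α : ℝ) (n k : ℕ) : ℝ :=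
  (1 + n) ^ 3 * k * (k + 2 * n + 1 - α) / (α + n) * wellPoisedProd α n k

variable {α : ℝ}

lemma wellPoisedProd_succ (α : ℝ) (n k : ℕ) : wellPoisedProd α n (k + 1) =
    wellPoisedProd α n k * ((α + n + k) * (α + k) ^ 3 / ((1 + k) * (1 + n + k) ^ 3)) :=
  Finset.prod_range_succ _ _

lemma min_le_abs_add_natCast (α : ℝ) (n : ℕ) : min (-α) (1 + α) ≤ |α + n| := by
  rcases n with _ | n
  · exact (min_le_left _ _).trans (by simpa using neg_le_abs α)
  · refine (min_le_right _ _).trans (le_trans ?_ (le_abs_self _))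
    push_cast
    linarith [n.cast_nonneg (α := ℝ)]

lemma add_natCast_ne_zero_of_neg (hα : -1 < α) (hα' : α < 0) (n : ℕ) : α + n ≠ 0 :=
  abs_pos.1 ((lt_min (neg_pos.2 hα') (by linarith)).trans_le (min_le_abs_add_natCast α n))

lemma wellPoisedProd_succ_left (α : ℝ) (n k : ℕ) :
    wellPoisedProd α (n + 1) k * ((α + n) * (1 + n + k) ^ 3) =
      wellPoisedProd α n k * ((α + n + k) * (1 + n) ^ 3) := by
  induction k with
  | zero => simp [wellPoisedProd]
  | succ k ih =>
    rw [wellPoisedProd_succ, wellPoisedProd_succ]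
    push_cast
    rw [mul_div_assoc', mul_div_assoc', div_mul_eq_mul_div, div_mul_eq_mul_div,
      div_eq_div_iff (by positivity) (by positivity)]
    linear_combination (α + n + 1 + k) * (α + k) ^ 3 * (2 + n + k) ^ 3 * (1 + k) * ih

lemma wellPoisedTerm_telescope (hα : -1 < α) (hα' : α < 0) (n k : ℕ) :
    (1 + α + n) * (1 + n - α) ^ 3 * wellPoisedTerm α (n + 1) k -
      (1 + n) ^ 3 * (1 + n - 2 * α) * wellPoisedTerm α n k =
      wellPoisedPartner α n (k + 1) - wellPoisedPartner α n k := by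
  have h₀ := add_natCast_ne_zero_of_neg hα hα' n
  have h₁ : 1 + α + n ≠ 0 := by linarith [n.cast_nonneg (α := ℝ)]
  have hleft : wellPoisedProd α (n + 1) k =
      wellPoisedProd α n k * ((α + n + k) * (1 + n) ^ 3) / ((α + n) * (1 + n + k) ^ 3) := by
    rw [eq_div_iff (by positivity), wellPoisedProd_succ_left]
  rw [wellPoisedTerm, wellPoisedTerm, wellPoisedPartner, wellPoisedPartner, wellPoisedProd_succ,
    hleft]
  push_cast
  rw [show α + ((n : ℝ) + 1) = 1 + α + n by ring]
  field_simp
  ring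

lemma abs_prod_div_le (hα : -1 < α) (hα' : α < 0) (n k : ℕ) :
    |∏ j ∈ Finset.range (k + 1), (α + j) / (1 + n + j)| ≤ 1 / ((n + 1) * (k + 1)) := by
  induction k with
  | zero =>
    rw [Finset.prod_range_one, Nat.cast_zero, add_zero, add_zero, abs_div, abs_of_neg hα',
      abs_of_pos (by positivity), add_comm, zero_add, mul_one]
    gcongr
    linarith
  | succ k ih =>
    have hnum : 0 ≤ α + (k + 1 : ℕ) := by push_cast; linarith [k.cast_nonneg (α := ℝ)]
    rw [Finset.prod_range_succ, abs_mul, abs_of_nonneg (div_nonneg hnum (by positivity))]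
    calc _ ≤ 1 / ((n + 1) * (k + 1)) * (((k : ℝ) + 1) / (k + 2)) := by
          gcongr ?_ * (?_ / ?_)
          · push_cast; linarith
          · push_cast; linarith [n.cast_nonneg (α := ℝ)]
      _ = _ := by push_cast; field_simp; ring

lemma abs_prod_add_div_le_one (hα : -1 < α) (hα' : α < 0) (n k : ℕ) :
    |∏ j ∈ Finset.range k, (α + n + j) / (1 + n + j)| ≤ 1 := by
  rw [Finset.abs_prod]
  refine Finset.prod_le_one (fun j _ => abs_nonneg _) fun j _ => ?_
  have : (0 : ℝ) ≤ n + j := by positivity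
  rw [abs_div, abs_of_pos (by positivity : (0 : ℝ) < 1 + n + j), div_le_one (by positivity), abs_le]
  constructor <;> linarith

lemma abs_wellPoisedProd_succ_le (hα : -1 < α) (hα' : α < 0) (n k : ℕ) :
    |wellPoisedProd α n (k + 1)| ≤ 1 / ((n + 1) ^ 2 * (k + 1) ^ 3) := by
  have hsplit : wellPoisedProd α n (k + 1) =
      (∏ j ∈ Finset.range (k + 1), (α + n + j) / (1 + n + j)) *
        (∏ j ∈ Finset.range (k + 1), (α + j) / (1 + (0 : ℕ) + j)) *
        (∏ j ∈ Finset.range (k + 1), (α + j) / (1 + n + j)) ^ 2 := by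
    rw [wellPoisedProd, ← Finset.prod_pow, ← Finset.prod_mul_distrib, ← Finset.prod_mul_distrib]
    refine Finset.prod_congr rfl fun j _ => ?_
    rw [Nat.cast_zero, add_zero]
    field_simp
  rw [hsplit, abs_mul, abs_mul, abs_pow]
  calc _ ≤ 1 * (1 / (((0 : ℕ) + 1) * (k + 1))) * (1 / (((n : ℝ) + 1) * (k + 1))) ^ 2 := by
        gcongr
        · exact abs_prod_add_div_le_one hα hα' n (k + 1)
        · exact abs_prod_div_le hα hα' 0 k
        · exact abs_prod_div_le hα hα' n k
    _ = _ := by push_cast; field_simp; ring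

lemma exists_abs_wellPoisedTerm_succ_le (hα : -1 < α) (hα' : α < 0) :
    ∃ C, ∀ n k : ℕ, |wellPoisedTerm α n (k + 1)| ≤ C / (n + 1) ^ 2 * (1 / ((k : ℝ) + 1) ^ 2) := by
  set δ := min (-α) (1 + α)
  have hδ : 0 < δ := lt_min (by linarith) (by linarith)
  refine ⟨1 + 2 / δ, fun n k => ?_⟩
  have hfactor : |(α + n + 2 * (k + 1 : ℕ)) / (α + n)| ≤ (1 + 2 / δ) * (k + 1) := by
    rw [add_div, div_self (add_natCast_ne_zero_of_neg hα hα' n)]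
    calc |1 + 2 * ((k + 1 : ℕ) : ℝ) / (α + n)| ≤ 1 + 2 * ((k + 1 : ℕ) : ℝ) / |α + n| := by
          refine (abs_add_le _ _).trans_eq ?_
          rw [abs_one, abs_div, abs_of_nonneg (by positivity : (0 : ℝ) ≤ 2 * ((k + 1 : ℕ) : ℝ))]
      _ ≤ 1 * (k + 1) + 2 * (k + 1) / δ := by
          push_cast
          gcongr
          · linarith [k.cast_nonneg (α := ℝ)]
          · exact min_le_abs_add_natCast α n
      _ = _ := by ring
  rw [wellPoisedTerm, abs_mul]
  calc _ ≤ (1 + 2 / δ) * (k + 1) * (1 / ((n + 1) ^ 2 * (k + 1) ^ 3)) := by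
        gcongr
        exact abs_wellPoisedProd_succ_le hα hα' n k
    _ = _ := by field_simp

lemma summable_one_div_natCast_add_one_sq : Summable fun k : ℕ => 1 / ((k : ℝ) + 1) ^ 2 := by
  simpa using (summable_nat_add_iff 1).2 (Real.summable_one_div_nat_pow.2 one_lt_two)

lemma wellPoisedTerm_zero (hα : -1 < α) (hα' : α < 0) (n : ℕ) : wellPoisedTerm α n 0 = 1 := by
  simp [wellPoisedTerm, wellPoisedProd, add_natCast_ne_zero_of_neg hα hα' n]

lemma summable_wellPoisedTerm (hα : -1 < α) (hα' : α < 0) (n : ℕ) :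
    Summable (wellPoisedTerm α n) := by
  obtain ⟨C, hC⟩ := exists_abs_wellPoisedTerm_succ_le hα hα'
  exact (summable_nat_add_iff 1).1
    (.of_norm_bounded (summable_one_div_natCast_add_one_sq.mul_left _) (hC n))

lemma tendsto_wellPoisedSum (hα : -1 < α) (hα' : α < 0) :
    Tendsto (wellPoisedSum α) atTop (𝓝 1) := by
  obtain ⟨C, hC⟩ := exists_abs_wellPoisedTerm_succ_le hα hα'
  have hsplit : wellPoisedSum α = fun n => 1 + ∑' k, wellPoisedTerm α n (k + 1) := by
    funext n
    rw [wellPoisedSum, (summable_wellPoisedTerm hα hα' n).tsum_eq_zero_add,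
      wellPoisedTerm_zero hα hα']
  have htail : Tendsto (fun n => ∑' k, wellPoisedTerm α n (k + 1)) atTop (𝓝 0) := by
    refine squeeze_zero_norm (fun n => tsum_of_norm_bounded
      (summable_one_div_natCast_add_one_sq.hasSum.mul_left (C / ((n : ℝ) + 1) ^ 2)) (hC n)) ?_
    have hpow : Tendsto (fun n : ℕ => ((n : ℝ) + 1) ^ 2) atTop atTop :=
      (tendsto_pow_atTop two_ne_zero).comp
        (tendsto_atTop_add_const_right _ 1 tendsto_natCast_atTop_atTop)
    simpa only [zero_mul] using (hpow.const_div_atTop C).mul_const _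
  rw [hsplit]
  simpa using htail.const_add 1

lemma tendsto_wellPoisedPartner (hα : -1 < α) (hα' : α < 0) (n : ℕ) :
    Tendsto (wellPoisedPartner α n) atTop (𝓝 0) := by
  rw [← tendsto_add_atTop_iff_nat 1]
  set K := (1 + n) * (2 * n + 3) / |α + n|
  refine squeeze_zero_norm (a := fun k : ℕ => K * (1 / ((k : ℝ) + 1))) (fun k => ?_)
    (by simpa using tendsto_one_div_add_atTop_nhds_zero_nat.const_mul K)
  have hn := add_natCast_ne_zero_of_neg hα hα' n
  have hlin : |((k + 1 : ℕ) : ℝ) + 2 * n + 1 - α| ≤ (2 * n + 3) * (k + 1) := by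
    have : (0 : ℝ) ≤ n * k := by positivity
    rw [abs_of_pos (by linarith [(by positivity : (0 : ℝ) ≤ (k + 1 : ℕ) + 2 * n)])]
    push_cast
    linarith [k.cast_nonneg (α := ℝ)]
  rw [wellPoisedPartner, Real.norm_eq_abs, abs_mul, abs_div, abs_mul,
    abs_of_nonneg (by positivity : (0 : ℝ) ≤ (1 + n) ^ 3 * ((k + 1 : ℕ) : ℝ))]
  calc _ ≤ (1 + n) ^ 3 * ((k + 1 : ℕ) : ℝ) * ((2 * n + 3) * (k + 1)) / |α + n| *
        (1 / ((n + 1) ^ 2 * (k + 1) ^ 3)) := by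
        gcongr
        exact abs_wellPoisedProd_succ_le hα hα' n k
    _ = _ := by push_cast; simp only [K]; field_simp; ring

lemma wellPoisedSum_succ (hα : -1 < α) (hα' : α < 0) (n : ℕ) :
    (1 + α + n) * (1 + n - α) ^ 3 * wellPoisedSum α (n + 1) =
      (1 + n) ^ 3 * (1 + n - 2 * α) * wellPoisedSum α n := by
  have hsum := (((summable_wellPoisedTerm hα hα' (n + 1)).hasSum.mul_left
    ((1 + α + n) * (1 + n - α) ^ 3)).sub ((summable_wellPoisedTerm hα hα' n).hasSum.mul_left
    ((1 + n) ^ 3 * (1 + n - 2 * α)))).tendsto_sum_nat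
  simp only [wellPoisedTerm_telescope hα hα', Finset.sum_range_sub] at hsum
  have hzero : wellPoisedPartner α n 0 = 0 := by simp [wellPoisedPartner]
  simp only [hzero, sub_zero] at hsum
  exact sub_eq_zero.1 (tendsto_nhds_unique hsum (tendsto_wellPoisedPartner hα hα' n))

lemma wellPoisedSum_mul_prod (hα : -1 < α) (hα' : α < 0) (n : ℕ) :
    wellPoisedSum α n * ∏ j ∈ Finset.range n,
      (1 + α + j) * (1 - α + j) ^ 3 / ((1 + j) ^ 3 * (1 - 2 * α + j)) = wellPoisedSum α 0 := by
  induction n with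
  | zero => simp
  | succ n ih =>
    have h : 1 - 2 * α + n ≠ 0 := by linarith [n.cast_nonneg (α := ℝ)]
    rw [Finset.prod_range_succ, ← ih, mul_left_comm, mul_comm (wellPoisedSum α n)]
    congr 1
    rw [mul_div_assoc', div_eq_iff (by positivity)]
    linear_combination wellPoisedSum_succ hα hα' n

lemma GammaSeq_quotient_eq_prod (hα : -1 < α) (hα' : α < 0) {n : ℕ} (hn : n ≠ 0) :
    (Real.GammaSeq 1 n ^ 3 * Real.GammaSeq (1 - 2 * α) n) /
      (Real.GammaSeq (1 + α) n * Real.GammaSeq (1 - α) n ^ 3) =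
      ∏ j ∈ Finset.range (n + 1),
        (1 + α + j) * (1 - α + j) ^ 3 / ((1 + j) ^ 3 * (1 - 2 * α + j)) := by
  have hn' : (0 : ℝ) < n := by positivity
  have hpow : ((n : ℝ) ^ (1 : ℝ)) ^ 3 * (n : ℝ) ^ (1 - 2 * α) =
      (n : ℝ) ^ (1 + α) * ((n : ℝ) ^ (1 - α)) ^ 3 := by
    rw [← Real.rpow_mul_natCast hn'.le, ← Real.rpow_mul_natCast hn'.le, ← Real.rpow_add hn',
      ← Real.rpow_add hn']
    congr 1
    push_cast
    ring
  have hprod : ∀ s : ℝ, 0 < s → ∏ j ∈ Finset.range (n + 1), (s + j) ≠ 0 := fun s hs =>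
    (Finset.prod_pos fun j _ => by positivity).ne'
  have h₁ := hprod 1 one_pos
  have h₂ := hprod (1 - 2 * α) (by linarith)
  have h₃ := hprod (1 + α) (by linarith)
  have h₄ := hprod (1 - α) (by linarith)
  simp only [Real.GammaSeq, Finset.prod_div_distrib, Finset.prod_mul_distrib, Finset.prod_pow]
  field_simp
  exact hpow

lemma tendsto_prod_Gamma (hα : -1 < α) (hα' : α < 0) :
    Tendsto (fun n => ∏ j ∈ Finset.range (n + 1),
      (1 + α + j) * (1 - α + j) ^ 3 / ((1 + j) ^ 3 * (1 - 2 * α + j))) atTop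
      (𝓝 (Real.Gamma (1 - 2 * α) / (Real.Gamma (1 + α) * Real.Gamma (1 - α) ^ 3))) := by
  have h₁ := (Real.Gamma_pos_of_pos (by linarith : 0 < 1 + α)).ne'
  have h₂ := (Real.Gamma_pos_of_pos (by linarith : 0 < 1 - α)).ne'
  have hlim := (((Real.GammaSeq_tendsto_Gamma 1).pow 3).mul
    (Real.GammaSeq_tendsto_Gamma (1 - 2 * α))).div
    ((Real.GammaSeq_tendsto_Gamma (1 + α)).mul ((Real.GammaSeq_tendsto_Gamma (1 - α)).pow 3))
    (mul_ne_zero h₁ (pow_ne_zero 3 h₂))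
  rw [Real.Gamma_one, one_pow, one_mul] at hlim
  refine hlim.congr' ?_
  filter_upwards [eventually_ne_atTop 0] with n hn
  exact GammaSeq_quotient_eq_prod hα hα' hn

lemma wellPoisedSum_zero_eq (hα : -1 < α) (hα' : α < 0) : wellPoisedSum α 0 =
    Real.Gamma (1 - 2 * α) / (Real.Gamma (1 + α) * Real.Gamma (1 - α) ^ 3) := by
  have hlim := ((tendsto_add_atTop_iff_nat 1).2 (tendsto_wellPoisedSum hα hα')).mul
    (tendsto_prod_Gamma hα hα')
  simp only [wellPoisedSum_mul_prod hα hα', one_mul] at hlim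
  exact tendsto_nhds_unique tendsto_const_nhds hlim

end WellPoised

section Periodic

lemma isLittleO_exp_mul_abs_im {c d : ℝ} (h : d < c) :
    (fun z : ℂ => Real.exp (d * |z.im|)) =o[imInfty] fun z => Real.exp (c * |z.im|) := by
  rw [Real.isLittleO_exp_comp_exp_comp]
  simp only [← sub_mul]
  exact tendsto_abs_im_imInfty.const_mul_atTop (sub_pos.2 h)

lemma isLittleO_div_abs_im_mul_exp (C c : ℝ) :
    (fun z : ℂ => C / |z.im| * Real.exp (c * |z.im|)) =o[imInfty]
      fun z => Real.exp (c * |z.im|) := by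
  have h := (isLittleO_one_iff ℝ).2 (tendsto_const_nhds.div_atTop tendsto_abs_im_imInfty :
    Tendsto (fun z : ℂ => C / |z.im|) imInfty (𝓝 0))
  simpa using h.mul_isBigO (isBigO_refl (fun z : ℂ => Real.exp (c * |z.im|)) _)

/-- The combination of the quartic sum along a half-line with the accelerated series that is
periodic in `y` by the Wilf–Zeilberger relation `wzSum_add_one`. -/
noncomputable def wzPeriodic (x : ℝ) (y : ℂ) : ℂ :=
  quarticSum (recipGammaPair x) (y + 1 / 2) -
    recipGammaPair x (y + 1 / 2) ^ 4 * (y + 1 / 2 - x) ^ 4 * wzSum x y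

variable {x : ℝ} {y : ℂ}

lemma differentiable_wzPeriodic (hx : -1 / 4 < x) (hx' : x < 0) :
    Differentiable ℂ (wzPeriodic x) := by
  have h₁ := (reciprocalDecay_recipGammaPair hx hx').differentiable_quarticSum
    (differentiable_recipGammaPair x)
  have h₂ := differentiable_recipGammaPair x
  have h₃ := differentiable_wzSum hx hx'.ne
  unfold wzPeriodic
  fun_prop

lemma wzPeriodic_add_one (hx : -1 / 4 < x) (hx' : x < 0) (y : ℂ) :
    wzPeriodic x (y + 1) = wzPeriodic x y := by
  have h₁ := (reciprocalDecay_recipGammaPair hx hx').quarticSum_eq_sum_add 1 (y + 1 / 2)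
  have h₂ := congrArg (· ^ 4) (recipGammaPair_add_one x (y + 1 / 2))
  have h₃ := wzSum_add_one hx hx'.ne y
  simp only [Finset.sum_range_one, Nat.cast_zero, Nat.cast_one, add_zero] at h₁
  unfold wzPeriodic
  rw [show y + 1 + 1 / 2 = y + 1 / 2 + 1 by ring, h₁]
  linear_combination (-wzSum x (y + 1)) * h₂ - recipGammaPair x (y + 1 / 2) ^ 4 * h₃

lemma recipGammaPair_mul_sub_neg (x : ℝ) (y : ℂ) :
    recipGammaPair x (-y + 1 / 2) * (-y + 1 / 2 - x) =
      recipGammaPair x (y + 1 / 2) * (y + 1 / 2 - x) := by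
  have h₁ := recipGammaPair_add_one x (y - 1 / 2)
  have h₂ := recipGammaPair_neg x (y - 1 / 2)
  rw [show y - 1 / 2 + 1 = y + 1 / 2 by ring] at h₁
  rw [show -(y - 1 / 2) = -y + 1 / 2 by ring] at h₂
  rw [h₂]
  linear_combination -h₁

lemma wzPeriodic_sub_neg (x : ℝ) (y : ℂ) :
    wzPeriodic x y - wzPeriodic x (-y) = quarticSum (recipGammaPair x) (y + 1 / 2) -
      quarticSum (recipGammaPair x) (-y + 1 / 2) := by
  have h := congrArg (· ^ 4) (recipGammaPair_mul_sub_neg x y)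
  unfold wzPeriodic
  rw [wzSum_neg]
  linear_combination wzSum x y * h

lemma norm_recipGammaPair_mul_sub_le (hx : -1 / 4 < x) (hx' : x < 0) {v : ℂ} (hv : 0 ≤ v.re)
    (him : 1 ≤ |v.im|) :
    ‖recipGammaPair x v * (v - x)‖ ≤ 25 / 2 * Real.exp (Real.pi * |v.im|) := by
  have hne : v.im ≠ 0 := fun h => by norm_num [h] at him
  have hone : 1 ≤ ‖v + 1‖ := him.trans (by simpa using abs_im_le_norm (v + 1))
  have hsub : ‖v - x‖ ≤ 2 * ‖v + 1‖ := calc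
    ‖v - x‖ = ‖v + 1 - ((1 + x : ℝ) : ℂ)‖ := by push_cast; ring_nf
    _ ≤ ‖v + 1‖ + (1 + x) := by
      refine (norm_sub_le _ _).trans_eq ?_
      rw [norm_real, Real.norm_of_nonneg (by linarith)]
    _ ≤ 2 * ‖v + 1‖ := by linarith
  calc ‖recipGammaPair x v * (v - x)‖
      ≤ Real.exp (Real.pi * |v.im|) * (25 / 4 * ‖v + 1‖⁻¹) * (2 * ‖v + 1‖) := by
        rw [norm_mul]
        gcongr
        refine (norm_recipGammaPair_le (Gamma_add_ne_zero_of_im hne)).trans ?_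
        gcongr
        exact norm_gammaQuot_le hx hx' hv him
    _ = 25 / 2 * Real.exp (Real.pi * |v.im|) := by field_simp; norm_num

lemma wzPeriodic_isBigO (hx : -1 / 4 < x) (hx' : x < 0) :
    wzPeriodic x =O[imInfty ⊓ 𝓟 {y | y.re ∈ Set.Ico (-1 / 2 : ℝ) (-1 / 2 + 1)}]
      fun y => Real.exp (15 / 2 * Real.pi * |y.im|) := by
  obtain ⟨C₁, h₁⟩ := exists_norm_quarticSum_recipGammaPair_le hx hx'
  obtain ⟨C₂, hC₂, h₂⟩ := exists_norm_wzSum_le hx hx'.ne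
  refine .of_bound (|C₁| + (25 / 2) ^ 4 * (C₂ * Real.exp (7 / 2 * Real.pi))) ?_
  filter_upwards [(eventually_le_abs_im 1).filter_mono inf_le_left,
    mem_inf_of_right (mem_principal_self _)] with y him hre
  have hre' : 0 ≤ (y + 1 / 2).re := by simpa using neg_le_iff_add_nonneg.1 (by linarith [hre.1])
  have him' : (y + 1 / 2).im = y.im := by simp
  have hsum := h₁ (y + 1 / 2) hre' (by rwa [him'])
  have hpair := norm_recipGammaPair_mul_sub_le hx hx' hre' (by rwa [him'])
  rw [him'] at hsum hpair
  have hwz : ‖wzSum x y‖ ≤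
      C₂ * Real.exp (7 / 2 * Real.pi) * Real.exp (7 / 2 * Real.pi * |y.im|) := by
    have habs : |y.re| ≤ 1 := abs_le.2 ⟨by linarith [hre.1], by linarith [hre.2]⟩
    have hnorm : ‖y‖ ≤ 1 + |y.im| := (norm_le_abs_re_add_abs_im y).trans (by linarith)
    rw [mul_assoc C₂, ← Real.exp_add, ← mul_one_add]
    exact (h₂ y).trans (by gcongr)
  rw [wzPeriodic, ← mul_pow, Real.norm_of_nonneg (Real.exp_pos _).le, add_mul]
  refine (norm_sub_le _ _).trans (add_le_add (hsum.trans ?_) ?_)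
  · gcongr
    · exact (div_le_div_of_nonneg_right (le_abs_self _) (abs_nonneg _)).trans
        (div_le_self (abs_nonneg _) him)
    · norm_num
  · calc ‖(recipGammaPair x (y + 1 / 2) * (y + 1 / 2 - x)) ^ 4 * wzSum x y‖
        ≤ (25 / 2 * Real.exp (Real.pi * |y.im|)) ^ 4 *
            (C₂ * Real.exp (7 / 2 * Real.pi) * Real.exp (7 / 2 * Real.pi * |y.im|)) := by
          rw [norm_mul, norm_pow]
          gcongr
      _ = _ := by
          rw [mul_pow, ← Real.exp_nat_mul, show 15 / 2 * Real.pi * |y.im| =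
            (4 : ℕ) * (Real.pi * |y.im|) + 7 / 2 * Real.pi * |y.im| by push_cast; ring,
            Real.exp_add]
          ring

lemma smallGrowth_wzPeriodic (hx : -1 / 4 < x) (hx' : x < 0) :
    SmallGrowth (8 * Real.pi) (wzPeriodic x) :=
  .of_strip (-1 / 2) (fun y => by rw [wzPeriodic_add_one hx hx'])
    ((wzPeriodic_isBigO hx hx').trans_isLittleO
      ((isLittleO_exp_mul_abs_im (by linarith [Real.pi_pos])).mono inf_le_left))

lemma wzPeriodic_neg_add_one (hx : -1 / 4 < x) (hx' : x < 0) (y : ℂ) :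
    wzPeriodic x (-(y + 1)) = wzPeriodic x (-y) := by
  rw [← wzPeriodic_add_one hx hx', neg_add, neg_add_cancel_right]

lemma smallGrowth_wzPeriodic_sub_neg (hx : -1 / 4 < x) (hx' : x < 0) :
    SmallGrowth (4 * Real.pi) fun y => wzPeriodic x y - wzPeriodic x (-y) := by
  obtain ⟨C, hC⟩ := exists_norm_quarticSum_recipGammaPair_le hx hx'
  refine .of_strip (-1 / 2) (fun y => by rw [wzPeriodic_add_one hx hx',
    wzPeriodic_neg_add_one hx hx']) ?_
  refine (IsBigO.of_bound 1 ?_).trans_isLittleO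
    ((isLittleO_div_abs_im_mul_exp (2 * C) _).mono inf_le_left)
  filter_upwards [(eventually_le_abs_im 1).filter_mono inf_le_left,
    mem_inf_of_right (mem_principal_self _)] with y him hre
  have h₁ := hC (y + 1 / 2) (by norm_num; linarith [hre.1]) (by simpa using him)
  have h₂ := hC (-y + 1 / 2) (by norm_num; linarith [hre.2]) (by simpa using him)
  rw [wzPeriodic_sub_neg, one_mul]
  calc _ ≤ _ := (norm_sub_le _ _).trans (add_le_add h₁ h₂)
    _ = 2 * C / |y.im| * Real.exp (4 * Real.pi * |y.im|) := by simp; ring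
    _ ≤ _ := le_abs_self _

lemma recipGammaPair_add_natCast {u : ℂ} (hu : ∀ j : ℕ, 1 - x + u + j ≠ 0) (k : ℕ) :
    recipGammaPair x (u + k) = (-1) ^ k *
      (∏ j ∈ Finset.range k, (x + u + j) / (1 - x + u + j)) * recipGammaPair x u := by
  induction k with
  | zero => simp
  | succ k ih =>
    have h := recipGammaPair_add_one x (u + k)
    rw [← add_assoc, ih] at h
    rw [Finset.prod_range_succ, pow_succ, Nat.cast_succ, ← add_assoc u, eq_div_of_mul_eq (hu k) h]
    ring

lemma quarticSum_recipGammaPair_self (hx' : x < 0) :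
    quarticSum (recipGammaPair x) x =
      (2 * x * wellPoisedSum (2 * x) 0 / Real.Gamma (1 - 2 * x) ^ 4 : ℝ) := by
  rw [quarticSum, wellPoisedSum, ← tsum_mul_left, ← tsum_div_const, ofReal_tsum]
  refine tsum_congr fun k => ?_
  have hsq : ((-1 : ℂ) ^ k) ^ 4 = 1 := by rw [pow_right_comm]; norm_num
  have hG : Complex.Gamma (1 - 2 * x) = Real.Gamma (1 - 2 * x) := by
    rw [← Complex.Gamma_ofReal]; push_cast; rfl
  have hprod : wellPoisedProd (2 * x) 0 k =
      (∏ j ∈ Finset.range k, (2 * x + j) / (1 + j)) ^ 4 := by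
    rw [wellPoisedProd, ← Finset.prod_pow]
    refine Finset.prod_congr rfl fun j _ => ?_
    rw [Nat.cast_zero, add_zero, add_zero, div_pow]
    ring
  have hx : (x : ℂ) ≠ 0 := ofReal_ne_zero.2 hx'.ne
  have hself : recipGammaPair x x = (Real.Gamma (1 - 2 * x) : ℂ)⁻¹ := by
    simp [recipGammaPair, sub_sub, ← two_mul, hG]
  rw [recipGammaPair_add_natCast fun j => by rw [sub_add_cancel]; norm_cast; omega, sub_add_cancel,
    ← two_mul, hself, wellPoisedTerm, hprod, mul_pow, mul_pow, hsq]
  push_cast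
  generalize ∏ j ∈ Finset.range k, (2 * x + j : ℂ) / (1 + j) = p
  rw [add_zero]
  field_simp

lemma quarticSum_recipGammaPair_one_sub (x : ℝ) :
    quarticSum (recipGammaPair x) (1 - x) = 0 := by
  have h (k : ℕ) : recipGammaPair x (1 - x + k) = 0 := by
    rw [recipGammaPair, sub_add_cancel_left, Complex.Gamma_neg_nat_eq_zero]
    simp
  simp [quarticSum, h]

lemma sin_two_pi_mul_neg (hx : -1 / 4 < x) (hx' : x < 0) : Real.sin (2 * Real.pi * x) < 0 :=
  Real.sin_neg_of_neg_of_neg_pi_lt (by nlinarith [Real.pi_pos]) (by nlinarith [Real.pi_pos])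

/-- The constant `A` in `wzPeriodic x y - wzPeriodic x (-y) = A * sin (2 π y)`. -/
noncomputable def wzAmplitude (x : ℝ) : ℝ :=
  -Real.Gamma (1 - 4 * x) / (Real.pi * Real.Gamma (1 - 2 * x) ^ 6)

lemma ofReal_wzAmplitude (x : ℝ) : (wzAmplitude x : ℂ) =
    -Complex.Gamma (1 - 4 * x) / (Real.pi * Complex.Gamma (1 - 2 * x) ^ 6) := by
  rw [wzAmplitude]
  push_cast [← Complex.Gamma_ofReal]
  rfl

lemma quarticSum_recipGammaPair_self_eq (hx : -1 / 4 < x) (hx' : x < 0) :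
    quarticSum (recipGammaPair x) x = (wzAmplitude x * -Real.sin (2 * Real.pi * x) : ℝ) := by
  have hrefl := Real.Gamma_mul_Gamma_one_sub (2 * x)
  have hsucc := Real.Gamma_add_one (s := 2 * x) (by linarith)
  have hG := (Real.Gamma_pos_of_pos (by linarith : 0 < 1 - 2 * x)).ne'
  have hG' := (Real.Gamma_pos_of_pos (by linarith : 0 < 1 + 2 * x)).ne'
  have hs := (sin_two_pi_mul_neg hx hx').ne
  have hpi := Real.pi_ne_zero
  rw [quarticSum_recipGammaPair_self hx', wellPoisedSum_zero_eq (by linarith) (by linarith),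
    wzAmplitude, show 1 - 2 * (2 * x) = 1 - 4 * x by ring]
  rw [show Real.pi * (2 * x) = 2 * Real.pi * x by ring] at hrefl
  rw [add_comm] at hsucc
  generalize Real.sin (2 * Real.pi * x) = s at *
  have hprod : Real.Gamma (1 + 2 * x) * Real.Gamma (1 - 2 * x) * s = 2 * x * Real.pi := by
    rw [hsucc, mul_assoc (2 * x), hrefl, mul_assoc, div_mul_cancel₀ _ hs]
  generalize Real.Gamma (1 - 4 * x) = g
  congr 1
  field_simp
  linear_combination -g * hprod

lemma wzPeriodic_sub_neg_eq (hx : -1 / 4 < x) (hx' : x < 0) (y : ℂ) :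
    wzPeriodic x y - wzPeriodic x (-y) = wzAmplitude x * sin (2 * Real.pi * y) := by
  have hd := differentiable_wzPeriodic hx hx'
  obtain ⟨q, hqd, hqp, hqs, hq⟩ := exists_eq_sin_mul_cos_mul_of_odd
    (g := fun y => wzPeriodic x y - wzPeriodic x (-y)) (hd.sub (hd.comp differentiable_neg))
    (fun y => by rw [wzPeriodic_add_one hx hx', wzPeriodic_neg_add_one hx hx'])
    (fun y => by simp) (smallGrowth_wzPeriodic_sub_neg hx hx')
  rw [show 4 * Real.pi - 2 * Real.pi = 2 * Real.pi by ring] at hqs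
  have hsin (y : ℂ) : wzPeriodic x y - wzPeriodic x (-y) = q 0 / 2 * sin (2 * Real.pi * y) := by
    rw [hq, eq_apply_zero_of_periodic hqd hqp hqs, mul_assoc 2, Complex.sin_two_mul]
    ring
  have hx₀ := hsin (x - 1 / 2)
  rw [wzPeriodic_sub_neg, sub_add_cancel, show -((x : ℂ) - 1 / 2) + 1 / 2 = 1 - x by ring,
    quarticSum_recipGammaPair_one_sub, quarticSum_recipGammaPair_self_eq hx hx',
    show (2 : ℂ) * Real.pi * (x - 1 / 2) = 2 * Real.pi * x - Real.pi by ring,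
    Complex.sin_sub_pi] at hx₀
  have hs : sin (2 * Real.pi * x : ℂ) ≠ 0 := by
    exact_mod_cast (sin_two_pi_mul_neg hx hx').ne
  have hA : q 0 / 2 = wzAmplitude x := by
    refine mul_right_cancel₀ hs ?_
    push_cast at hx₀
    linear_combination hx₀
  rw [hsin, hA]

end Periodic

section Value

variable {x : ℝ}

lemma sin_pi_mul_add_add_half (x y : ℂ) :
    sin (Real.pi * (x + (y + 1 / 2))) = cos (Real.pi * (x + y)) := by
  rw [← sin_add_pi_div_two]
  ring_nf

lemma exists_wzPeriodic_eq_cos_pow_mul (hx : -1 / 4 < x) (hx' : x < 0) :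
    ∃ a b c : ℂ, ∀ y, wzPeriodic x y = cos (Real.pi * (x + y)) ^ 4 *
      (a + b * cos (2 * Real.pi * y) + c * sin (2 * Real.pi * y)) := by
  have hre {u : ℂ} (hu : 2 < u.re) : 0 < x + u.re := by linarith
  have hhalf {y : ℂ} (hy : 2 < y.re) : 2 < (y + 1 / 2).re := by norm_num; linarith
  have hsin (y : ℂ) :
      sin (Real.pi * (y + (x + 1 / 2 : ℝ))) = sin (Real.pi * (x + (y + 1 / 2))) := by
    push_cast
    ring_nf
  let f : ℂ → ℂ := fun y => (quarticSum (gammaQuot x) (y + 1 / 2) -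
    gammaQuot x (y + 1 / 2) ^ 4 * (y + 1 / 2 - x) ^ 4 * wzSum x y) / Real.pi ^ 4
  have hf (y : ℂ) (hy : 2 < y.re) : DifferentiableAt ℂ f y := by
    have h₁ : DifferentiableAt ℂ (fun y : ℂ => quarticSum (gammaQuot x) (y + 1 / 2)) y :=
      differentiableAt_comp_add_const.2 <|
        (reciprocalDecay_gammaQuot hx hx').differentiableAt_of_two_lt_re
          (fun u hu => differentiableAt_gammaQuot (hre hu)) (hhalf hy)
    have h₂ : DifferentiableAt ℂ (fun y : ℂ => gammaQuot x (y + 1 / 2)) y :=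
      differentiableAt_comp_add_const.2 (differentiableAt_gammaQuot (hre (hhalf hy)))
    have h₃ := differentiable_wzSum hx hx'.ne
    fun_prop
  have hfac (y : ℂ) (hy : 2 < y.re) :
      wzPeriodic x y = sin (Real.pi * (y + (x + 1 / 2 : ℝ))) ^ 4 * f y := by
    have hG (k : ℕ) : Complex.Gamma (x + (y + 1 / 2 + k)) ≠ 0 :=
      Gamma_add_ne_zero_of_re (hre ((hhalf hy).trans_le (by simp)))
    have hG₀ : Complex.Gamma (x + (y + 1 / 2)) ≠ 0 := by simpa using hG 0
    rw [wzPeriodic, quarticSum_recipGammaPair_eq_sin_mul hG, recipGammaPair_eq_sin_mul hG₀, hsin]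
    ring
  obtain ⟨q, hqd, hqp, hqs, hq⟩ := exists_eq_sin_pow_mul hf 4 norm_one
    (differentiable_wzPeriodic hx hx') (fun y => by rw [wzPeriodic_add_one hx hx', one_mul])
    (smallGrowth_wzPeriodic hx hx') hfac
  obtain ⟨a, b, c, hD⟩ := exists_eq_add_cos_add_sin hqd (fun y => by rw [hqp]; norm_num)
    (by convert hqs using 1; push_cast; ring)
  exact ⟨a, b, c, fun y => by rw [hq, hD, hsin, sin_pi_mul_add_add_half]⟩

lemma sin_pow_five_mul_add_eq {θ a b c A : ℂ}
    (h : ∀ y, ((1 + cos (θ + y)) / 2) ^ 2 * (a + b * cos y + c * sin y) -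
      ((1 + cos (θ - y)) / 2) ^ 2 * (a + b * cos y - c * sin y) = A * sin y) :
    sin θ ^ 5 * (a + b) = -(A * (1 + cos θ * (2 * cos θ ^ 2 - 1))) := by
  -- Divided by `sin y`, the hypothesis is a polynomial identity in `t = cos y`.
  have hpoly (t : ℂ) (ht : 1 - t ^ 2 ≠ 0) :
      c * ((1 + cos θ * t) ^ 2 + sin θ ^ 2 * (1 - t ^ 2)) / 2 -
        sin θ * (1 + cos θ * t) * (a + b * t) = A := by
    obtain ⟨y, rfl⟩ := cos_surjective t
    rw [← sin_sq] at ht ⊢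
    have hy := h y
    rw [cos_add, cos_sub] at hy
    refine mul_right_cancel₀ (fun h₀ => ht (by rw [h₀]; ring)) (b := sin y) ?_
    linear_combination hy
  have h₀ := hpoly 0 (by norm_num)
  have h₁ := hpoly (1 / 2) (by norm_num)
  have h₂ := hpoly (-1 / 2) (by norm_num)
  have hcs := sin_sq_add_cos_sq θ
  generalize sin θ = s at *
  generalize cos θ = κ at *
  have hlin : c * κ = s * (b + κ * a) := by linear_combination h₁ - h₂
  have hquad : c * (κ ^ 2 - s ^ 2) = 2 * s * κ * b := by
    linear_combination 4 * (h₁ + h₂ - 2 * h₀)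
  have hc : c = 2 * s * κ ^ 2 * a := by
    linear_combination 2 * κ * hlin - hquad - c * hcs
  have ha : s ^ 5 * a = -A := by
    linear_combination (1 + s ^ 2) / 2 * hc - h₀ + s * a * (1 + s ^ 2) * hcs
  linear_combination (1 + κ * (2 * κ ^ 2 - 1)) * ha + s ^ 4 * κ * hc - s ^ 4 * hlin

lemma wzPeriodic_zero_mul_sin_pow (hx : -1 / 4 < x) (hx' : x < 0) :
    wzPeriodic x 0 * sin (2 * Real.pi * x) ^ 5 = -(wzAmplitude x * cos (Real.pi * x) ^ 4 *
      (1 + cos (2 * Real.pi * x) * (2 * cos (2 * Real.pi * x) ^ 2 - 1))) := by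
  obtain ⟨a, b, c, h⟩ := exists_wzPeriodic_eq_cos_pow_mul hx hx'
  have hcos (z : ℂ) : cos (Real.pi * z) ^ 4 = ((1 + cos (2 * Real.pi * z)) / 2) ^ 2 := by
    rw [mul_assoc, cos_two_mul]
    ring
  have hcoeff := sin_pow_five_mul_add_eq (θ := 2 * Real.pi * x) (a := a) (b := b) (c := c)
    (A := wzAmplitude x) fun y => by
      have hpi : (Real.pi : ℂ) ≠ 0 := ofReal_ne_zero.2 Real.pi_ne_zero
      obtain ⟨z, rfl⟩ : ∃ z, 2 * Real.pi * z = y := ⟨y / (2 * Real.pi), by field_simp⟩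
      rw [← wzPeriodic_sub_neg_eq hx hx', h, h, hcos, hcos]
      simp only [mul_neg, sin_neg, cos_neg, ← sub_eq_add_neg, mul_add (2 * _ : ℂ) (x : ℂ), mul_sub]
  rw [h, mul_zero, cos_zero, sin_zero, add_zero]
  linear_combination cos (Real.pi * x) ^ 4 * hcoeff

end Value

section Series

/-- The complex Pochhammer symbol `(a)_z = Γ(a + z) / Γ(a)`. -/
noncomputable def gammaPoch (a z : ℂ) : ℂ := Complex.Gamma (a + z) / Complex.Gamma a

/-- The coefficient `16 ^ (-z) (1/2)_z³ (1/4)_z (3/4)_z / (1)_z⁵` of the quintic series. -/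
noncomputable def quinticCoeff (z : ℂ) : ℂ :=
  (16 : ℂ) ^ (-z) * (gammaPoch (1 / 2) z ^ 3 * gammaPoch (1 / 4) z * gammaPoch (3 / 4) z /
    gammaPoch 1 z ^ 5)

/-- The quotient of rising factorials `(1/2 + z)_n / (3/2 - z)_n`. -/
noncomputable def risingQuot (z : ℂ) (n : ℕ) : ℂ :=
  ∏ j ∈ Finset.range n, (1 / 2 + z + j) / (3 / 2 - z + j)

/-- The summand of the accelerated series, as a function of the shifted index `z`. -/
noncomputable def quinticTerm (z : ℂ) : ℂ := quinticCoeff z * (120 * z ^ 2 + 34 * z + 3)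

variable {z : ℂ}

lemma Gamma_one_half_eq_sqrt_pi : Complex.Gamma (1 / 2) = (√Real.pi : ℂ) := by
  rw [← Real.Gamma_one_half_eq, ← Complex.Gamma_ofReal]
  norm_num

lemma sqrt_pi_ne_zero : (√Real.pi : ℂ) ≠ 0 :=
  ofReal_ne_zero.2 (Real.sqrt_ne_zero'.2 Real.pi_pos)

lemma gammaPoch_mul_gammaPoch_quarters (z : ℂ) : gammaPoch (1 / 4) z * gammaPoch (3 / 4) z =
    Complex.Gamma (1 / 2 + 2 * z) / (2 ^ (2 * z) * (√Real.pi : ℂ)) := by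
  have hz := Complex.Gamma_mul_Gamma_add_half (1 / 4 + z)
  have h₀ := Complex.Gamma_mul_Gamma_add_half (1 / 4)
  have hpi := sqrt_pi_ne_zero
  have hE : (2 : ℂ) ^ (2 * z) ≠ 0 := by simp
  have hE' : (2 : ℂ) ^ (1 / 2 : ℂ) ≠ 0 := by simp
  rw [show (1 / 4 + z + 1 / 2 : ℂ) = 3 / 4 + z by ring,
    show (2 * (1 / 4 + z) : ℂ) = 1 / 2 + 2 * z by ring,
    show (1 - (1 / 2 + 2 * z) : ℂ) = 1 / 2 - 2 * z by ring,
    Complex.cpow_sub _ _ two_ne_zero] at hz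
  rw [show (1 / 4 + 1 / 2 : ℂ) = 3 / 4 by norm_num, show (2 * (1 / 4) : ℂ) = 1 / 2 by norm_num,
    Gamma_one_half_eq_sqrt_pi, show (1 - 1 / 2 : ℂ) = 1 / 2 by norm_num] at h₀
  rw [gammaPoch, gammaPoch, div_mul_div_comm, hz, h₀]
  generalize (2 : ℂ) ^ (1 / 2 : ℂ) = R at *
  field_simp

lemma Gamma_half_add_mul_Gamma_half_sub_mul_cos {w : ℂ} (hw : |w.re| < 1 / 2) :
    Complex.Gamma (1 / 2 + w) * Complex.Gamma (1 / 2 - w) * cos (Real.pi * w) = Real.pi := by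
  obtain ⟨hw₁, hw₂⟩ := abs_lt.1 hw
  have h := Complex.Gamma_mul_Gamma_one_sub (1 / 2 + w)
  have h₁ : Complex.Gamma (1 / 2 + w) ≠ 0 :=
    Complex.Gamma_ne_zero_of_re_pos (by norm_num; linarith)
  have h₂ : Complex.Gamma (1 / 2 - w) ≠ 0 :=
    Complex.Gamma_ne_zero_of_re_pos (by norm_num; linarith)
  rw [show (1 : ℂ) - (1 / 2 + w) = 1 / 2 - w by ring, mul_add, mul_one_div,
    add_comm ((Real.pi : ℂ) / 2), sin_add_pi_div_two] at h
  have hcos : cos (Real.pi * w) ≠ 0 := fun h₀ => by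
    rw [h₀, div_zero] at h
    exact mul_ne_zero h₁ h₂ h
  rw [h, div_mul_cancel₀ _ hcos]

lemma cos_pi_mul_ne_zero {w : ℂ} (hw : |w.re| < 1 / 2) : cos (Real.pi * w) ≠ 0 :=
  right_ne_zero_of_mul
    ((Gamma_half_add_mul_Gamma_half_sub_mul_cos hw).trans_ne (ofReal_ne_zero.2 Real.pi_ne_zero))

lemma cos_two_pi_mul_ne_zero {w : ℂ} (hw : |w.re| < 1 / 4) : cos (2 * Real.pi * w) ≠ 0 := by
  rw [mul_comm 2 (Real.pi : ℂ), mul_assoc]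
  exact cos_pi_mul_ne_zero (by simp [abs_mul]; linarith)

lemma Gamma_one_add_mul_Gamma_one_sub_mul_sin {w : ℂ} (hw : |w.re| < 1) :
    Complex.Gamma (1 + w) * Complex.Gamma (1 - w) * sin (Real.pi * w) = Real.pi * w := by
  obtain ⟨hw₁, hw₂⟩ := abs_lt.1 hw
  rcases eq_or_ne w 0 with rfl | h₀
  · simp
  have h := Complex.Gamma_mul_Gamma_one_sub w
  have h₁ : Complex.Gamma (1 + w) ≠ 0 :=
    Complex.Gamma_ne_zero_of_re_pos (by norm_num; linarith)
  have h₂ : Complex.Gamma (1 - w) ≠ 0 :=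
    Complex.Gamma_ne_zero_of_re_pos (by norm_num; linarith)
  rw [add_comm, Complex.Gamma_add_one w h₀] at h₁ ⊢
  have hsin : sin (Real.pi * w) ≠ 0 := fun h' => by
    rw [h', div_zero] at h
    exact mul_ne_zero (right_ne_zero_of_mul h₁) h₂ h
  rw [mul_assoc w, h, mul_assoc, div_mul_cancel₀ _ hsin, mul_comm]

lemma quinticCoeff_eq (z : ℂ) : quinticCoeff z = Complex.Gamma (1 / 2 + z) ^ 3 *
    Complex.Gamma (1 / 2 + 2 * z) /
      ((2 ^ (2 * z)) ^ 3 * (√Real.pi : ℂ) ^ 4 * Complex.Gamma (1 + z) ^ 5) := by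
  have hE : (2 : ℂ) ^ (2 * z) ≠ 0 := by simp
  have h16 : (16 : ℂ) ^ (-z) = ((2 ^ (2 * z)) ^ 2)⁻¹ := by
    rw [cpow_neg, two_mul z, cpow_add _ _ two_ne_zero]
    have h₄ := natCast_mul_natCast_cpow 2 2 z
    have h₁₆ := natCast_mul_natCast_cpow 4 4 z
    norm_num at h₄ h₁₆
    rw [h₁₆, h₄, sq]
  have hpi := sqrt_pi_ne_zero
  rw [quinticCoeff, mul_assoc (_ ^ 3), gammaPoch_mul_gammaPoch_quarters, h16, gammaPoch,
    gammaPoch, Gamma_one_half_eq_sqrt_pi, Complex.Gamma_one]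
  field_simp

lemma Gamma_half_sub_mul_Gamma_one_sub (z : ℂ) :
    Complex.Gamma (1 / 2 - z) * Complex.Gamma (1 - z) =
      Complex.Gamma (1 - 2 * z) * 2 ^ (2 * z) * (√Real.pi : ℂ) := by
  have h := Complex.Gamma_mul_Gamma_add_half (1 / 2 - z)
  rwa [show (1 / 2 - z + 1 / 2 : ℂ) = 1 - z by ring,
    show (2 * (1 / 2 - z) : ℂ) = 1 - 2 * z by ring, sub_sub_cancel] at h

lemma quinticCoeff_mul_Gamma (hz : |z.re| < 1 / 4) :
    32 * z ^ 5 * quinticCoeff z * Complex.Gamma (1 / 2 - z) ^ 8 * Complex.Gamma (1 - 4 * z) *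
      cos (Real.pi * z) ^ 8 * cos (2 * Real.pi * z) * Real.pi =
    Complex.Gamma (1 - 2 * z) ^ 6 * sin (2 * Real.pi * z) ^ 5 := by
  have hre : |(2 * z).re| < 1 / 2 := by simp [abs_mul]; linarith
  have hcos := Gamma_half_add_mul_Gamma_half_sub_mul_cos (hz.trans (by norm_num))
  have hcos₂ := Gamma_half_add_mul_Gamma_half_sub_mul_cos hre
  have hsin := Gamma_one_add_mul_Gamma_one_sub_mul_sin (hz.trans (by norm_num))
  have hdup := Gamma_half_sub_mul_Gamma_one_sub z
  have hdup₂ := Gamma_half_sub_mul_Gamma_one_sub (2 * z)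
  have hpi : (Real.pi : ℂ) ≠ 0 := ofReal_ne_zero.2 Real.pi_ne_zero
  have hE : (2 : ℂ) ^ (2 * z) ≠ 0 := by simp
  have hR := sqrt_pi_ne_zero
  obtain ⟨h₁, h₂⟩ := mul_ne_zero_iff.1 (left_ne_zero_of_mul (hcos.trans_ne hpi))
  obtain ⟨h₃, h₄⟩ := mul_ne_zero_iff.1 (left_ne_zero_of_mul (hcos₂.trans_ne hpi))
  have h₅ : Complex.Gamma (1 + z) ≠ 0 :=
    Complex.Gamma_ne_zero_of_re_pos (by norm_num; linarith [neg_abs_le z.re])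
  rw [← mul_assoc, mul_comm (Real.pi : ℂ)] at hcos₂
  rw [cpow_ofNat_mul 2 2 (2 * z), ← mul_assoc 2 2 z, show (2 * 2 : ℂ) = 4 by norm_num] at hdup₂
  rw [quinticCoeff_eq, mul_assoc 2, sin_two_mul, ← mul_assoc]
  generalize Complex.Gamma (1 / 2 + z) = h, Complex.Gamma (1 / 2 - z) = g,
    Complex.Gamma (1 / 2 + 2 * z) = H, Complex.Gamma (1 / 2 - 2 * z) = G,
    Complex.Gamma (1 + z) = a, Complex.Gamma (1 - z) = b, Complex.Gamma (1 - 2 * z) = L,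
    Complex.Gamma (1 - 4 * z) = M, cos (2 * Real.pi * z) = c, cos (Real.pi * z) = C,
    sin (Real.pi * z) = S, (2 : ℂ) ^ (2 * z) = E, (√Real.pi : ℂ) = R at *
  obtain rfl : z = a * b * S / Real.pi := by rw [hsin, mul_div_cancel_left₀ _ hpi]
  obtain rfl : C = Real.pi / (h * g) := by rw [← hcos]; field_simp
  obtain rfl : c = Real.pi / (H * G) := by rw [← hcos₂]; field_simp
  obtain rfl : L = g * b / (E * R) := by rw [hdup]; field_simp
  obtain rfl : M = G * (g * b / (E * R)) / (E ^ 2 * R) := by rw [hdup₂]; field_simp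
  field_simp
  ring

lemma gammaPoch_add_one {a : ℂ} (h : a + z ≠ 0) :
    gammaPoch a (z + 1) = (z + a) * gammaPoch a z := by
  rw [gammaPoch, ← add_assoc, Complex.Gamma_add_one _ h, add_comm z, mul_div_assoc, gammaPoch]

lemma quinticCoeff_add_one_mul (hz : -1 / 4 < z.re) : quinticCoeff (z + 1) * (z + 1) ^ 5 =
    quinticCoeff z * ((z + 1 / 2) ^ 3 * (z + 1 / 4) * (z + 3 / 4) / 16) := by
  have hne {a : ℂ} (ha : 1 / 4 ≤ a.re) : a + z ≠ 0 :=
    ne_zero_of_re_pos (by rw [add_re]; linarith)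
  have h₁ : z + 1 ≠ 0 := by rw [add_comm]; exact hne (by norm_num)
  rw [quinticCoeff, quinticCoeff, gammaPoch_add_one (hne (by norm_num)),
    gammaPoch_add_one (hne (by norm_num)), gammaPoch_add_one (hne (by norm_num)),
    gammaPoch_add_one (hne (by norm_num)), neg_add', cpow_sub _ _ (by norm_num), cpow_one]
  field_simp

end Series

section RealIdentity

variable {x : ℝ}

lemma re_ofReal_add_natCast_gt (hx : -1 / 4 < x) (n : ℕ) : -1 / 4 < ((x : ℂ) + n).re := by
  rw [add_re, ofReal_re, natCast_re]
  linarith [n.cast_nonneg (α := ℝ)]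

lemma quinticCoeff_add_natCast_mul (hx : -1 / 4 < x) (hx0 : x ≠ 0) (n : ℕ) :
    quinticCoeff (x + n) * (x + n) ^ 5 = quinticCoeff x * x ^ 5 *
      (wzWeight x n * ∏ j ∈ Finset.range n, ((1 / 2 + x + j : ℝ) : ℂ) ^ 8) := by
  induction n with
  | zero => simp [wzWeight]
  | succ n ih =>
    have hN : ((x + n : ℝ) : ℂ) ≠ 0 := ofReal_ne_zero.2 (add_natCast_ne_zero hx hx0 n)
    have hN' : ((x + n + 1 / 2 : ℝ) : ℂ) ≠ 0 := by
      refine ofReal_ne_zero.2 (ne_of_gt ?_)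
      linarith [n.cast_nonneg (α := ℝ)]
    have hratio : ((x + n + 1 / 2) ^ 3 * (x + n + 1 / 4) * (x + n + 3 / 4) / 16 : ℂ) =
        (x + n) ^ 5 * (wzRatio (x + n) * ((1 / 2 + x + n : ℝ) : ℂ) ^ 8) := by
      push_cast at hN hN'
      rw [wzRatio]
      push_cast
      rw [show (1 / 2 + x + n : ℂ) = x + n + 1 / 2 by ring]
      field_simp
    rw [Nat.cast_succ, ← add_assoc, quinticCoeff_add_one_mul (re_ofReal_add_natCast_gt hx n),
      hratio, ← mul_assoc, ih, wzWeight, wzWeight, Finset.prod_range_succ, Finset.prod_range_succ]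
    push_cast
    ring

lemma quinticTerm_add_natCast (hx : -1 / 4 < x) (hx0 : x ≠ 0) (n : ℕ) :
    quinticTerm (x + n) = -512 * x ^ 5 * quinticCoeff x * wzTerm x n 0 := by
  have hN : (x + n : ℂ) ≠ 0 := by exact_mod_cast add_natCast_ne_zero hx hx0 n
  have hcert : (120 * (x + n) ^ 2 + 34 * (x + n) + 3 : ℂ) =
      -512 * (x + n) ^ 5 * wzCert (x + n) 0 := by
    rw [wzCert]
    push_cast
    field_simp
    ring
  rw [quinticTerm, hcert, wzTerm]
  simp only [ne_eq, OfNat.ofNat_ne_zero, not_false_eq_true, zero_pow, sub_zero, ← pow_mul,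
    Nat.reduceMul]
  linear_combination -512 * wzCert (x + n) 0 * quinticCoeff_add_natCast_mul hx hx0 n

lemma recipGammaPair_half (hx : x < 1 / 2) : recipGammaPair x (1 / 2) =
    2 / ((1 - 2 * x) * Complex.Gamma (1 / 2 - x) ^ 2) := by
  have h : (1 / 2 - x : ℂ) ≠ 0 := ne_zero_of_re_pos (by norm_num; linarith)
  rw [recipGammaPair, sub_right_comm, show (1 - 1 / 2 - x : ℂ) = 1 / 2 - x by ring,
    show (1 - x + 1 / 2 : ℂ) = 1 / 2 - x + 1 by ring, Complex.Gamma_add_one _ h,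
    show (1 - 2 * x : ℂ) = 2 * (1 / 2 - x) by ring]
  generalize (1 / 2 - x : ℂ) = w at *
  field_simp

lemma quarticSum_recipGammaPair_half (hx : x < 1 / 2) :
    quarticSum (recipGammaPair x) (1 / 2) = recipGammaPair x (1 / 2) ^ 4 *
      ∑' n : ℕ, (2 * n + 1) * risingQuot x n ^ 4 := by
  rw [quarticSum, ← tsum_mul_left]
  refine tsum_congr fun n => ?_
  have hsq : ((-1 : ℂ) ^ n) ^ 4 = 1 := by rw [pow_right_comm]; norm_num
  have hne (j : ℕ) : (1 - x + 1 / 2 + j : ℂ) ≠ 0 :=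
    ne_zero_of_re_pos (by norm_num; linarith [j.cast_nonneg (α := ℝ)])
  have hprod : ∏ j ∈ Finset.range n, (x + 1 / 2 + j : ℂ) / (1 - x + 1 / 2 + j) =
      risingQuot x n := by
    refine Finset.prod_congr rfl fun j _ => ?_
    congr 1 <;> ring
  rw [recipGammaPair_add_natCast hne, hprod, mul_pow, mul_pow, hsq]
  ring

lemma Gamma_pow_mul_wzPeriodic_zero (hx : x < 1 / 2) :
    Complex.Gamma (1 / 2 - x) ^ 8 * wzPeriodic x 0 =
      16 / (1 - 2 * x) ^ 4 * ∑' n : ℕ, (2 * n + 1) * risingQuot x n ^ 4 - wzSum x 0 := by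
  have hG : Complex.Gamma (1 / 2 - x) ≠ 0 :=
    Complex.Gamma_ne_zero_of_re_pos (by norm_num; linarith)
  have h : (1 - 2 * x : ℂ) ≠ 0 := ne_zero_of_re_pos (by norm_num; linarith)
  rw [wzPeriodic, zero_add, quarticSum_recipGammaPair_half hx, recipGammaPair_half hx]
  generalize Complex.Gamma (1 / 2 - x) = g at *
  field_simp
  ring

lemma sum_quinticTerm_eq_wzPeriodic (hx : -1 / 4 < x) (hx' : x < 0) :
    1 / 32 * ∑' n : ℕ, quinticTerm (x + n) =
      16 * x ^ 5 * quinticCoeff x * (Complex.Gamma (1 / 2 - x) ^ 8 * wzPeriodic x 0) -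
      quinticCoeff x * (256 * x ^ 5 / (1 - 2 * x) ^ 4) *
        ∑' n : ℕ, (2 * n + 1) * risingQuot x n ^ 4 := by
  simp only [quinticTerm_add_natCast hx hx'.ne, tsum_mul_left]
  rw [Gamma_pow_mul_wzPeriodic_zero (by linarith), wzSum]
  ring

lemma quinticCoeff_mul_wzPeriodic_zero (hx : -1 / 4 < x) (hx' : x < 0) :
    16 * x ^ 5 * quinticCoeff x * (Complex.Gamma (1 / 2 - x) ^ 8 * wzPeriodic x 0) =
      1 / Real.pi ^ 2 * ((8 * cos (Real.pi * x) ^ 4 - 12 * cos (Real.pi * x) ^ 2 + 5) /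
        (2 * cos (Real.pi * x) ^ 4 - cos (Real.pi * x) ^ 2)) := by
  have hP := wzPeriodic_zero_mul_sin_pow hx hx'
  have hre : |(x : ℂ).re| < 1 / 4 := by
    rw [ofReal_re, abs_lt]
    constructor <;> linarith
  have hT := quinticCoeff_mul_Gamma hre
  have hs : sin (2 * Real.pi * x) ≠ 0 := by exact_mod_cast (sin_two_pi_mul_neg hx hx').ne
  have hc := cos_two_pi_mul_ne_zero hre
  have hC := cos_pi_mul_ne_zero (hre.trans (by norm_num))
  have hL : Complex.Gamma (1 - 2 * x) ≠ 0 :=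
    Complex.Gamma_ne_zero_of_re_pos (by norm_num; linarith)
  have hpi : (Real.pi : ℂ) ≠ 0 := ofReal_ne_zero.2 Real.pi_ne_zero
  have hcC : cos (2 * Real.pi * x) = 2 * cos (Real.pi * x) ^ 2 - 1 := by
    rw [mul_assoc, cos_two_mul]
  rw [ofReal_wzAmplitude] at hP
  generalize Complex.Gamma (1 - 2 * x) = L, Complex.Gamma (1 - 4 * x) = M,
    Complex.Gamma (1 / 2 - x) = g, cos (2 * Real.pi * x) = c, cos (Real.pi * x) = C,
    sin (2 * Real.pi * x) = s, wzPeriodic x 0 = P at *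
  have hD : (2 * C ^ 4 - C ^ 2 : ℂ) = C ^ 2 * c := by rw [hcC]; ring
  rw [hD]
  have hN : 1 + c * (2 * c ^ 2 - 1) = 2 * C ^ 2 * (8 * C ^ 4 - 12 * C ^ 2 + 5) := by
    rw [hcC]
    ring
  rw [hN] at hP
  field_simp at hP ⊢
  refine mul_right_cancel₀ (mul_ne_zero (pow_ne_zero 5 hs) (pow_ne_zero 6 hL)) ?_
  linear_combination 16 * x ^ 5 * quinticCoeff x * g ^ 8 * Real.pi * C ^ 2 * c * hP +
    (8 * C ^ 4 - 12 * C ^ 2 + 5) * hT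

end RealIdentity

section Continuation

variable {z : ℂ} {r : ℝ}

lemma neg_quarter_lt_re (hz : ‖z‖ < 1 / 4) : -1 / 4 < z.re := by
  linarith [neg_le_of_abs_le (abs_re_le_norm z)]

lemma norm_add_ofReal_le_norm_add_one {a : ℝ} (ha : -1 / 2 ≤ a) (ha' : a ≤ 1)
    (hz : -1 / 4 < z.re) : ‖z + a‖ ≤ ‖z + 1‖ := by
  rw [← sq_le_sq₀ (norm_nonneg _) (norm_nonneg _), Complex.sq_norm, Complex.sq_norm,
    normSq_apply, normSq_apply]
  simp only [add_re, ofReal_re, one_re, add_im, ofReal_im, one_im]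
  nlinarith

lemma norm_quinticCoeff_add_one_le (hz : -1 / 4 < z.re) :
    ‖quinticCoeff (z + 1)‖ ≤ ‖quinticCoeff z‖ * (1 / 16) := by
  have h₁ : 0 < ‖z + 1‖ := norm_pos_iff.2 (ne_zero_of_re_pos (by rw [add_re, one_re]; linarith))
  have hle {a : ℝ} (ha : -1 / 2 ≤ a) (ha' : a ≤ 1) := norm_add_ofReal_le_norm_add_one ha ha' hz
  have h₂ := hle (a := 1 / 2) (by norm_num) (by norm_num)
  have h₃ := hle (a := 1 / 4) (by norm_num) (by norm_num)
  have h₄ := hle (a := 3 / 4) (by norm_num) (by norm_num)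
  push_cast at h₂ h₃ h₄
  refine le_of_mul_le_mul_right ?_ (pow_pos h₁ 5)
  calc ‖quinticCoeff (z + 1)‖ * ‖z + 1‖ ^ 5
      = ‖quinticCoeff z‖ * (‖z + 1 / 2‖ ^ 3 * ‖z + 1 / 4‖ * ‖z + 3 / 4‖ / 16) := by
        rw [← norm_pow, ← norm_mul, quinticCoeff_add_one_mul hz]
        simp only [norm_mul, norm_div, norm_pow, Complex.norm_ofNat]
    _ ≤ ‖quinticCoeff z‖ * (‖z + 1‖ ^ 3 * ‖z + 1‖ * ‖z + 1‖ / 16) := by gcongr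
    _ = ‖quinticCoeff z‖ * (1 / 16) * ‖z + 1‖ ^ 5 := by ring

lemma norm_quinticCoeff_add_natCast_le (hz : -1 / 4 < z.re) (n : ℕ) :
    ‖quinticCoeff (z + n)‖ ≤ ‖quinticCoeff z‖ * (1 / 16) ^ n := by
  induction n with
  | zero => simp
  | succ n ih =>
    have hn : -1 / 4 < (z + n).re := by
      rw [add_re, natCast_re]
      linarith [n.cast_nonneg (α := ℝ)]
    rw [Nat.cast_succ, ← add_assoc, pow_succ, ← mul_assoc]
    exact (norm_quinticCoeff_add_one_le hn).trans (by gcongr)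

lemma norm_quinticTerm_add_natCast_le (hz : ‖z‖ < 1 / 4) (n : ℕ) :
    ‖quinticTerm (z + n)‖ ≤ ‖quinticCoeff z‖ * (157 * ((n + 1) ^ 2 * (1 / 16) ^ n)) := by
  have hzn : ‖z + n‖ ≤ n + 1 := by
    linarith [norm_add_le z n, norm_natCast (α := ℂ) n]
  have hpoly : ‖120 * (z + n) ^ 2 + 34 * (z + n) + 3‖ ≤ 157 * ((n : ℝ) + 1) ^ 2 := by
    refine norm_add₃_le.trans ?_
    simp only [norm_mul, norm_pow, Complex.norm_ofNat]
    nlinarith [norm_nonneg (z + n), n.cast_nonneg (α := ℝ)]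
  calc ‖quinticTerm (z + n)‖
      = ‖quinticCoeff (z + n)‖ * ‖120 * (z + n) ^ 2 + 34 * (z + n) + 3‖ := norm_mul _ _
    _ ≤ ‖quinticCoeff z‖ * (1 / 16) ^ n * (157 * ((n : ℝ) + 1) ^ 2) := by
        gcongr
        exact norm_quinticCoeff_add_natCast_le (neg_quarter_lt_re hz) n
    _ = _ := by ring

lemma summable_add_one_sq_mul_geometric :
    Summable fun n : ℕ => 157 * (((n : ℝ) + 1) ^ 2 * (1 / 16) ^ n) := by
  have h := (summable_nat_add_iff 1).2
    (summable_pow_mul_geometric_of_norm_lt_one 2 (r := (1 / 16 : ℝ)) (by norm_num))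
  refine (h.mul_left (157 * 16)).congr fun n => ?_
  push_cast
  ring

lemma summable_quinticTerm (hz : ‖z‖ < 1 / 4) : Summable fun n : ℕ => quinticTerm (z + n) :=
  .of_norm_bounded (summable_add_one_sq_mul_geometric.mul_left _)
    (norm_quinticTerm_add_natCast_le hz)

lemma differentiableAt_gammaPoch {a : ℂ} (h : 0 < (a + z).re) :
    DifferentiableAt ℂ (gammaPoch a) z := by
  have hΓ : DifferentiableAt ℂ Complex.Gamma (a + z) :=
    differentiableAt_Gamma _ fun m hm => by
      rw [hm, neg_re, natCast_re] at h
      linarith [m.cast_nonneg (α := ℝ)]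
  exact (hΓ.comp z (differentiableAt_id.const_add a)).div_const _

lemma differentiableAt_quinticCoeff (hz : -1 / 4 < z.re) : DifferentiableAt ℂ quinticCoeff z := by
  have hre {a : ℂ} (ha : 1 / 4 ≤ a.re) : 0 < (a + z).re := by rw [add_re]; linarith
  have h₁ := differentiableAt_gammaPoch (hre (a := 1 / 2) (by norm_num))
  have h₂ := differentiableAt_gammaPoch (hre (a := 1 / 4) (by norm_num))
  have h₃ := differentiableAt_gammaPoch (hre (a := 3 / 4) (by norm_num))
  have h₄ := differentiableAt_gammaPoch (hre (a := 1) (by norm_num))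
  have h₀ : gammaPoch 1 z ^ 5 ≠ 0 := pow_ne_zero 5 <| div_ne_zero
    (Complex.Gamma_ne_zero_of_re_pos (hre (by norm_num))) (by simp)
  have h₁₆ : DifferentiableAt ℂ (fun z : ℂ => (16 : ℂ) ^ (-z)) z :=
    differentiableAt_id.neg.const_cpow (.inl (by norm_num))
  unfold quinticCoeff
  fun_prop (disch := assumption)

lemma differentiableOn_tsum_quinticTerm (hr : r < 1 / 4) :
    DifferentiableOn ℂ (fun z => ∑' n : ℕ, quinticTerm (z + n)) (Metric.ball 0 r) := by
  have hball {z : ℂ} (hz : z ∈ Metric.closedBall 0 r) : ‖z‖ < 1 / 4 :=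
    (mem_closedBall_zero_iff.1 hz).trans_lt hr
  obtain ⟨C, hC⟩ := (isCompact_closedBall (0 : ℂ) r).exists_bound_of_continuousOn
    (f := quinticCoeff) fun z hz =>
      (differentiableAt_quinticCoeff (neg_quarter_lt_re (hball hz))).continuousAt.continuousWithinAt
  refine differentiableOn_tsum_of_summable_norm (summable_add_one_sq_mul_geometric.mul_left C)
    (fun n z hz => ?_) Metric.isOpen_ball fun n z hz => ?_
  · have hn : -1 / 4 < (z + n).re := by
      rw [add_re, natCast_re]
      linarith [n.cast_nonneg (α := ℝ),
        neg_quarter_lt_re (hball (Metric.ball_subset_closedBall hz))]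
    have h := differentiableAt_comp_add_const.2 (differentiableAt_quinticCoeff hn)
    exact (h.mul (by fun_prop)).differentiableWithinAt
  · have hz := Metric.ball_subset_closedBall hz
    refine (norm_quinticTerm_add_natCast_le (hball hz) n).trans ?_
    gcongr
    exact hC z hz

lemma half_add_div_le_rpow {r t : ℝ} (hr : 0 ≤ r) (hr' : r < 1 / 2) (ht : 0 ≤ t) :
    (1 / 2 + r + t) / (3 / 2 - r + t) ≤ ((t + 1) / (t + 2)) ^ (1 - 2 * r) := by
  have hbern := rpow_one_add_le_one_add_mul_self (s := 1 / (t + 1)) (p := 1 - 2 * r)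
    (neg_one_lt_zero.le.trans (by positivity)) (by linarith) (by linarith)
  have hp : 0 ≤ 1 - 2 * r := by linarith
  have hinv : ((t + 1) / (t + 2)) ^ (1 - 2 * r) = ((1 + 1 / (t + 1)) ^ (1 - 2 * r))⁻¹ := by
    rw [← Real.inv_rpow (by positivity)]
    congr 1
    field_simp
    ring
  calc (1 / 2 + r + t) / (3 / 2 - r + t) ≤ (1 + (1 - 2 * r) * (1 / (t + 1)))⁻¹ := by
        have hb : 0 < 3 / 2 - r + t := by linarith
        rw [← one_div, div_le_div_iff₀ hb (by positivity)]
        field_simp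
        nlinarith
    _ ≤ _ := by
        rw [hinv]
        exact inv_anti₀ (by positivity) hbern

lemma norm_risingQuot_le (hr : r < 1 / 2) (hz : ‖z‖ ≤ r) (n : ℕ) :
    ‖risingQuot z n‖ ≤ ((n : ℝ) + 1) ^ (2 * r - 1) := by
  have hr₀ : 0 ≤ r := (norm_nonneg z).trans hz
  induction n with
  | zero => simp [risingQuot]
  | succ n ih =>
    have hnum : ‖1 / 2 + z + n‖ ≤ 1 / 2 + r + n := by
      refine norm_add₃_le.trans ?_
      norm_num
      exact hz
    have hden : 3 / 2 - r + n ≤ ‖3 / 2 - z + n‖ := by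
      refine le_trans ?_ (re_le_norm _)
      norm_num
      linarith [re_le_norm z]
    have hden₀ : 0 < 3 / 2 - r + n := by linarith [n.cast_nonneg (α := ℝ)]
    have htelescope : ((n : ℝ) + 1) ^ (2 * r - 1) * ((n + 1) / (n + 2)) ^ (1 - 2 * r) =
        ((n + 1 : ℕ) + 1 : ℝ) ^ (2 * r - 1) := by
      rw [← neg_sub 1 (2 * r), Real.rpow_neg (by positivity), Real.rpow_neg (by positivity),
        Real.div_rpow (by positivity) (by positivity), Nat.cast_succ, add_assoc,
        one_add_one_eq_two]
      field_simp
    rw [risingQuot, Finset.prod_range_succ, ← risingQuot, norm_mul, norm_div, ← htelescope]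
    gcongr
    calc ‖1 / 2 + z + n‖ / ‖3 / 2 - z + n‖ ≤ (1 / 2 + r + n) / (3 / 2 - r + n) := by gcongr
      _ ≤ _ := half_add_div_le_rpow hr₀ hr n.cast_nonneg

lemma norm_quarticTerm_le (hr : r < 1 / 2) (hz : ‖z‖ ≤ r) (n : ℕ) :
    ‖(2 * n + 1) * risingQuot z n ^ 4‖ ≤ 2 * ((n : ℝ) + 1) ^ (8 * r - 3) := by
  have hodd : ‖(2 * n + 1 : ℂ)‖ ≤ 2 * ((n : ℝ) + 1) := by
    refine (norm_add_le _ _).trans ?_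
    norm_num
    linarith
  calc ‖(2 * n + 1) * risingQuot z n ^ 4‖ = ‖(2 * n + 1 : ℂ)‖ * ‖risingQuot z n‖ ^ 4 := by
        rw [norm_mul, norm_pow]
    _ ≤ 2 * ((n : ℝ) + 1) * (((n : ℝ) + 1) ^ (2 * r - 1)) ^ 4 := by
        gcongr
        exact norm_risingQuot_le hr hz n
    _ = 2 * ((n : ℝ) + 1) ^ (8 * r - 3) := by
        rw [show 8 * r - 3 = (2 * r - 1) * (4 : ℕ) + 1 by push_cast; ring,
          Real.rpow_add_one (by positivity), Real.rpow_mul_natCast (by positivity)]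
        ring

lemma summable_add_one_rpow (hr : r < 1 / 4) :
    Summable fun n : ℕ => 2 * ((n : ℝ) + 1) ^ (8 * r - 3) := by
  have h := (summable_nat_add_iff 1).2 (Real.summable_nat_rpow (p := 8 * r - 3).2 (by linarith))
  simpa using h.mul_left 2

lemma summable_risingQuot (hz : ‖z‖ < 1 / 4) :
    Summable fun n : ℕ => (2 * n + 1) * risingQuot z n ^ 4 :=
  .of_norm_bounded (summable_add_one_rpow hz) (norm_quarticTerm_le (by linarith) le_rfl)

lemma differentiableOn_tsum_risingQuot (hr : r < 1 / 4) :
    DifferentiableOn ℂ (fun z => ∑' n : ℕ, (2 * n + 1) * risingQuot z n ^ 4)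
      (Metric.ball 0 r) := by
  have hball {z : ℂ} (hz : z ∈ Metric.ball 0 r) : ‖z‖ ≤ r := (mem_ball_zero_iff.1 hz).le
  refine differentiableOn_tsum_of_summable_norm (summable_add_one_rpow hr)
    (fun n z hz => ?_) Metric.isOpen_ball fun n z hz => norm_quarticTerm_le (by linarith)
      (hball hz) n
  have hne (j : ℕ) : 3 / 2 - z + j ≠ 0 := ne_zero_of_re_pos <| by
    norm_num
    linarith [re_le_norm z, hball hz, j.cast_nonneg (α := ℝ)]
  have hquot : DifferentiableAt ℂ (fun z => risingQuot z n) z := by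
    unfold risingQuot
    refine DifferentiableAt.fun_finsetProd fun j _ => ?_
    have := hne j
    fun_prop (disch := assumption)
  exact ((hquot.pow 4).const_mul _).differentiableWithinAt

lemma two_mul_cos_pow_four_sub_ne_zero (hz : ‖z‖ < 1 / 4) :
    2 * cos (Real.pi * z) ^ 4 - cos (Real.pi * z) ^ 2 ≠ 0 := by
  have hre : |z.re| < 1 / 4 := (abs_re_le_norm z).trans_lt hz
  have h : 2 * cos (Real.pi * z) ^ 4 - cos (Real.pi * z) ^ 2 =
      cos (Real.pi * z) ^ 2 * cos (2 * Real.pi * z) := by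
    rw [mul_assoc 2, cos_two_mul]
    ring
  rw [h]
  exact mul_ne_zero (pow_ne_zero 2 (cos_pi_mul_ne_zero (hre.trans (by norm_num))))
    (cos_two_pi_mul_ne_zero hre)

lemma differentiableOn_closedForm (hr : r < 1 / 4) :
    DifferentiableOn ℂ (fun z => 1 / Real.pi ^ 2 *
      ((8 * cos (Real.pi * z) ^ 4 - 12 * cos (Real.pi * z) ^ 2 + 5) /
        (2 * cos (Real.pi * z) ^ 4 - cos (Real.pi * z) ^ 2)) -
      quinticCoeff z * (256 * z ^ 5 / (1 - 2 * z) ^ 4) *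
        ∑' n : ℕ, (2 * n + 1) * risingQuot z n ^ 4) (Metric.ball 0 r) := by
  intro z hz
  have hz' : ‖z‖ < 1 / 4 := (mem_ball_zero_iff.1 hz).trans hr
  have hsum := (differentiableOn_tsum_risingQuot hr z hz).differentiableAt
    (Metric.isOpen_ball.mem_nhds hz)
  have hcoeff := differentiableAt_quinticCoeff (neg_quarter_lt_re hz')
  have hcos := two_mul_cos_pow_four_sub_ne_zero hz'
  have hden : (1 - 2 * z) ^ 4 ≠ 0 := pow_ne_zero 4 <| ne_zero_of_re_pos <| by
    norm_num
    linarith [re_le_norm z]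
  refine DifferentiableAt.differentiableWithinAt ?_
  fun_prop (disch := assumption)

lemma frequently_ofReal_neg : ∃ᶠ z : ℂ in 𝓝[≠] 0, ∃ x : ℝ, -1 / 4 < x ∧ x < 0 ∧ z = x := by
  have hlim : Tendsto ((↑) : ℝ → ℂ) (𝓝[<] 0) (𝓝[≠] 0) :=
    tendsto_nhdsWithin_iff.2 ⟨(continuous_ofReal.tendsto' 0 0 ofReal_zero).mono_left
      nhdsWithin_le_nhds, eventually_mem_nhdsWithin.mono fun x hx => by simpa using hx.ne⟩
  refine hlim.frequently (Eventually.frequently ?_)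
  filter_upwards [Ioo_mem_nhdsLT (show (-1 / 4 : ℝ) < 0 by norm_num)] with x hx
  exact ⟨x, hx.1, hx.2, rfl⟩

theorem identity_pi2_1_general (hz : ‖z‖ < 1 / 4) :
    Summable (fun n : ℕ => quinticTerm (z + n)) ∧
    Summable (fun n : ℕ => (2 * n + 1) * risingQuot z n ^ 4) ∧
    1 / 32 * ∑' n : ℕ, quinticTerm (z + n) =
      1 / Real.pi ^ 2 * ((8 * cos (Real.pi * z) ^ 4 - 12 * cos (Real.pi * z) ^ 2 + 5) /
        (2 * cos (Real.pi * z) ^ 4 - cos (Real.pi * z) ^ 2)) -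
      quinticCoeff z * (256 * z ^ 5 / (1 - 2 * z) ^ 4) *
        ∑' n : ℕ, (2 * n + 1) * risingQuot z n ^ 4 := by
  refine ⟨summable_quinticTerm hz, summable_risingQuot hz, ?_⟩
  obtain ⟨r, hzr, hr⟩ := exists_between hz
  have hr₀ : 0 < r := (norm_nonneg z).trans_lt hzr
  refine AnalyticOnNhd.eqOn_of_preconnected_of_frequently_eq
    (((differentiableOn_tsum_quinticTerm hr).const_mul _).analyticOnNhd Metric.isOpen_ball)
    ((differentiableOn_closedForm hr).analyticOnNhd Metric.isOpen_ball)
    (convex_ball 0 r).isPreconnected (Metric.mem_ball_self hr₀) ?_ (mem_ball_zero_iff.2 hzr)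
  refine frequently_ofReal_neg.mono ?_
  rintro _ ⟨x, hx, hx', rfl⟩
  rw [sum_quinticTerm_eq_wzPeriodic hx hx', quinticCoeff_mul_wzPeriodic_zero hx hx']

lemma gammaPoch_ofReal (a t : ℝ) : gammaPoch a t = (pochG a t : ℂ) := by
  rw [gammaPoch, pochG, ← ofReal_add, Complex.Gamma_ofReal, Complex.Gamma_ofReal, ofReal_div]

lemma quinticCoeff_ofReal (t : ℝ) : quinticCoeff t =
    ((16 : ℝ) ^ (-t) * (pochG (1 / 2) t ^ 3 * pochG (1 / 4) t * pochG (3 / 4) t /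
      pochG 1 t ^ 5) : ℝ) := by
  rw [quinticCoeff, ofReal_mul, ofReal_cpow (by norm_num)]
  push_cast [← gammaPoch_ofReal]
  rfl

lemma quinticTerm_ofReal (t : ℝ) : quinticTerm t =
    ((2 : ℝ) ^ (-(4 : ℝ) * t) * (pochG (1 / 2) t ^ 3 * pochG (1 / 4) t * pochG (3 / 4) t /
      pochG 1 t ^ 5) * (120 * t ^ 2 + 34 * t + 3) : ℝ) := by
  rw [quinticTerm, quinticCoeff_ofReal, neg_mul, ← mul_neg, Real.rpow_mul zero_le_two]
  norm_num

lemma risingQuot_ofReal (x : ℝ) (n : ℕ) :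
    risingQuot x n = ((pochR (1 / 2 + x) n / pochR (3 / 2 - x) n : ℝ) : ℂ) := by
  rw [pochR, pochR, ← Finset.prod_div_distrib, risingQuot]
  push_cast
  rfl

end Continuation

end

/-- For `-1/4 < x < 1/4`,
`(1/32) ∑_{n≥0} 2^{-4(n+x)} (1/2)_{n+x}³(1/4)_{n+x}(3/4)_{n+x}/(1)_{n+x}⁵ (120(n+x)²+34(n+x)+3)
 = (1/π²)(8cos⁴πx - 12cos²πx + 5)/(2cos⁴πx - cos²πx)
   - 16^{-x} (1/2)_x³(1/4)_x(3/4)_x/(1)_x⁵ · 256x⁵/(1-2x)⁴ ·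
     ∑_{n≥0} (2n+1) ((1/2+x)_n/(3/2-x)_n)⁴`. -/
theorem identity_pi2_1 (x : ℝ) (hx1 : -1/4 < x) (hx2 : x < 1/4) :
    Summable (fun n : ℕ =>
      (2 : ℝ) ^ (-(4 : ℝ) * ((n : ℝ) + x)) *
        (pochG (1/2) ((n : ℝ) + x) ^ 3 * pochG (1/4) ((n : ℝ) + x) *
          pochG (3/4) ((n : ℝ) + x) / pochG 1 ((n : ℝ) + x) ^ 5) *
        (120 * ((n : ℝ) + x) ^ 2 + 34 * ((n : ℝ) + x) + 3)) ∧
    Summable (fun n : ℕ =>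
      (2 * (n : ℝ) + 1) * (pochR (1/2 + x) n / pochR (3/2 - x) n) ^ 4) ∧
    (1/32 : ℝ) * (∑' n : ℕ,
        (2 : ℝ) ^ (-(4 : ℝ) * ((n : ℝ) + x)) *
          (pochG (1/2) ((n : ℝ) + x) ^ 3 * pochG (1/4) ((n : ℝ) + x) *
            pochG (3/4) ((n : ℝ) + x) / pochG 1 ((n : ℝ) + x) ^ 5) *
          (120 * ((n : ℝ) + x) ^ 2 + 34 * ((n : ℝ) + x) + 3))
      = (1 / Real.pi ^ 2) *
          ((8 * Real.cos (Real.pi * x) ^ 4 - 12 * Real.cos (Real.pi * x) ^ 2 + 5) /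
            (2 * Real.cos (Real.pi * x) ^ 4 - Real.cos (Real.pi * x) ^ 2)) -
        (16 : ℝ) ^ (-x) *
          (pochG (1/2) x ^ 3 * pochG (1/4) x * pochG (3/4) x / pochG 1 x ^ 5) *
          (256 * x ^ 5 / (1 - 2 * x) ^ 4) *
          ∑' n : ℕ,
            (2 * (n : ℝ) + 1) * (pochR (1/2 + x) n / pochR (3/2 - x) n) ^ 4 := by
  have h := identity_pi2_1_general (z := x)
    (by rw [Complex.norm_real]; exact abs_lt.2 ⟨by linarith, hx2⟩)
  simp only [← Complex.ofReal_natCast, ← Complex.ofReal_add, quinticTerm_ofReal,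
    quinticCoeff_ofReal, risingQuot_ofReal] at h
  simp only [add_comm (Nat.cast _) x]
  refine ⟨by exact_mod_cast h.1, by exact_mod_cast h.2.1, Complex.ofReal_injective ?_⟩
  push_cast at h ⊢
  exact h.2.2
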